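/- arXiv:math/0603292 — 10 statements merged into one kernel-verified Lean document; each statement's English description precedes it below -/
import Mathlib

section
/- For every real number x ≥ 1, the sum R_{1,2}(x) := Σ_{x < n ≤ 2x} r(n) satisfies R_{1,2}(x) ≤ 4.8x. -/
/-- `r n` is the number of representations of `n` as a sum of two squares of integers. -/
noncomputable def r (n : ℕ) : ℕ := Set.ncard {p : ℤ × ℤ | p.1 ^ 2 + p.2 ^ 2 = (n : ℤ)}

/-!
Since `(u + v)² + (u - v)² = 2(u² + v²)`, we have `r (2n) = r n`. The terms with `n ≤ x` are
therefore exactly the even terms of `∑_{n ≤ 2x} r n`, so the sum over `(x, 2x]` equals the sum of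
`r` over the odd `n ≤ N = ⌊2x⌋`. It counts the lattice points `(u, v)` of the disc
`u² + v² ≤ N` with `u + v` odd. The disc lies in the square `|u|, |v| ≤ s = ⌊√N⌋`, of whose
`(2s + 1)²` points at most half have `u + v` odd, so the sum is at most `2s(s + 1)`. This is at most
`12N/5` unless `N` is one of `1`, `4`, `9`, `16`; the first has `N < 2`, and the other three
are finite computations. The constant is sharp: equality holds at `x = 5/2`.
-/

open Finset

theorem sum_Ioc_half_eq_sum_odd {M : Type*} [AddCommMonoid M] {f : ℕ → M}
    (hf : ∀ n, f (2 * n) = f n) (N : ℕ) :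
    ∑ n ∈ Ioc (N / 2) N, f n = ∑ n ∈ Ioc 0 N with Odd n, f n := by
  induction N with
  | zero => simp
  | succ N ih =>
    rw [sum_filter, sum_Ioc_succ_top N.zero_le, ← sum_filter, ← ih]
    rcases Nat.even_or_odd' (N + 1) with ⟨m, hm | hm⟩
    · rw [if_neg (by grind), add_zero]
      calc ∑ n ∈ Ioc ((N + 1) / 2) (N + 1), f n
        _ = ∑ n ∈ Ioc (N / 2 + 1) N, f n + f (N + 1) := by
          rw [show (N + 1) / 2 = N / 2 + 1 by omega, sum_Ioc_succ_top (by omega)]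
        _ = f (N / 2 + 1) + ∑ n ∈ Ioc (N / 2 + 1) N, f n := by
          rw [show N + 1 = 2 * (N / 2 + 1) by omega, hf, add_comm]
        _ = ∑ n ∈ Ioc (N / 2) N, f n := by
          rw [← insert_Ioc_add_one_left_eq_Ioc (a := N / 2) (by omega), sum_insert (by simp)]
    · rw [if_pos (by grind), show (N + 1) / 2 = N / 2 by omega, sum_Ioc_succ_top (by omega)]

theorem r_two_mul (n : ℕ) : r (2 * n) = r n := by
  let rotate : ℤ × ℤ → ℤ × ℤ := fun p => (p.1 + p.2, p.1 - p.2)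
  have rotate_injective : rotate.Injective := by
    rintro ⟨a, b⟩ ⟨c, d⟩ h
    simp only [rotate, Prod.mk.injEq] at h ⊢
    omega
  have image_rotate : {p : ℤ × ℤ | p.1 ^ 2 + p.2 ^ 2 = (2 * n : ℕ)} =
      rotate '' {p | p.1 ^ 2 + p.2 ^ 2 = (n : ℤ)} := by
    ext ⟨a, b⟩
    constructor
    · intro h
      have even_add : Even (a + b) := by
        have : Even (a ^ 2 + b ^ 2) := ⟨n, by push_cast at h; simpa [two_mul] using h⟩
        simpa [Int.even_add, Int.even_pow] using this
      obtain ⟨c, hc⟩ := even_add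
      obtain rfl : b = 2 * c - a := by omega
      refine ⟨(c, a - c), ?_, by simp only [rotate, Prod.mk.injEq]; omega⟩
      simp only [Set.mem_ofPred_eq] at h ⊢
      push_cast at h
      linarith
    · rintro ⟨⟨c, d⟩, h, heq⟩
      simp only [rotate, Prod.mk.injEq] at heq
      obtain ⟨rfl, rfl⟩ := heq
      simp only [Set.mem_ofPred_eq] at h ⊢
      push_cast
      linarith
  rw [r, image_rotate, Set.ncard_image_of_injective _ rotate_injective, r]

theorem r_eq_card_filter {n s : ℕ} (hn : n < (s + 1) ^ 2) :
    r n = #{p ∈ Icc (-s : ℤ) s ×ˢ Icc (-s : ℤ) s | p.1.natAbs ^ 2 + p.2.natAbs ^ 2 = n} := by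
  rw [r, ← Set.ncard_coe_finset]
  congr 1
  ext ⟨a, b⟩
  have cast_iff : a ^ 2 + b ^ 2 = n ↔ a.natAbs ^ 2 + b.natAbs ^ 2 = n := by
    zify
    simp only [sq_abs]
  simp only [Set.mem_ofPred_eq, coe_filter, mem_product, mem_Icc, cast_iff, iff_and_self]
  intro h
  have ha : a.natAbs < s + 1 := lt_of_pow_lt_pow_left₀ 2 (by positivity) (by omega)
  have hb : b.natAbs < s + 1 := lt_of_pow_lt_pow_left₀ 2 (by positivity) (by omega)
  omega

theorem sum_r_eq_card_filter {A : Finset ℕ} {s : ℕ} (hA : ∀ n ∈ A, n < (s + 1) ^ 2) :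
    ∑ n ∈ A, r n =
      #{p ∈ Icc (-s : ℤ) s ×ˢ Icc (-s : ℤ) s | p.1.natAbs ^ 2 + p.2.natAbs ^ 2 ∈ A} := by
  rw [sum_congr rfl fun n hn => r_eq_card_filter (hA n hn), sum_card_fiberwise_eq_card_filter]

theorem two_mul_card_filter_iff_not_le {α : Type*} (T : Finset α) (P : α → Prop)
    [DecidablePred P] : 2 * #{p ∈ T ×ˢ T | P p.1 ↔ ¬P p.2} ≤ #T ^ 2 := by
  classical
  set A := {a ∈ T | P a}
  set B := {a ∈ T | ¬P a}
  have subset : {p ∈ T ×ˢ T | P p.1 ↔ ¬P p.2} ⊆ A ×ˢ B ∪ B ×ˢ A := by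
    intro p
    simp only [A, B, mem_filter, mem_product, mem_union]
    tauto
  calc 2 * #{p ∈ T ×ˢ T | P p.1 ↔ ¬P p.2}
    _ ≤ 2 * (#A * #B + #B * #A) := by
      grw [subset, card_union_le, card_product, card_product]
    _ = 4 * #A * #B := by ring
    _ ≤ (#A + #B) ^ 2 := four_mul_le_sq_add _ _
    _ = #T ^ 2 := by rw [card_filter_add_card_filter_not]

theorem sum_odd_r_le {N s : ℕ} (hN : N < (s + 1) ^ 2) :
    ∑ n ∈ Ioc 0 N with Odd n, r n ≤ 2 * s * (s + 1) := by
  have card_Icc : #(Icc (-s : ℤ) s) = 2 * s + 1 := by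
    rw [Int.card_Icc]
    omega
  have half_square := two_mul_card_filter_iff_not_le (Icc (-s : ℤ) s) Even
  rw [card_Icc, show (2 * s + 1) ^ 2 = 2 * (2 * s * (s + 1)) + 1 by ring] at half_square
  calc ∑ n ∈ Ioc 0 N with Odd n, r n
    _ = #{p ∈ Icc (-s : ℤ) s ×ˢ Icc (-s : ℤ) s |
          p.1.natAbs ^ 2 + p.2.natAbs ^ 2 ∈ {n ∈ Ioc 0 N | Odd n}} :=
      sum_r_eq_card_filter fun n hn => by grind
    _ ≤ #{p ∈ Icc (-s : ℤ) s ×ˢ Icc (-s : ℤ) s | Even p.1 ↔ ¬Even p.2} := by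
      refine card_le_card (monotone_filter_right _ fun p _ hp => ?_)
      have odd_add := (mem_filter.1 hp).2
      simp only [← Nat.not_even_iff_odd, Nat.even_add, Nat.even_pow, Int.natAbs_even] at odd_add
      tauto
    _ ≤ 2 * s * (s + 1) := by omega

theorem five_mul_sum_odd_r_sq_le {s : ℕ} (hs : s ∈ Icc 2 4) :
    5 * ∑ n ∈ Ioc 0 (s ^ 2) with Odd n, r n ≤ 12 * s ^ 2 := by
  rw [sum_r_eq_card_filter (s := s) fun n hn => by grind]
  revert s
  decide +kernel

theorem five_mul_sum_odd_r_le {N : ℕ} (hN : 2 ≤ N) :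
    5 * ∑ n ∈ Ioc 0 N with Odd n, r n ≤ 12 * N := by
  obtain ⟨s, s_sq_le, lt_succ_sq⟩ : ∃ s, s ^ 2 ≤ N ∧ N < (s + 1) ^ 2 :=
    ⟨N.sqrt, N.sqrt_le', N.lt_succ_sqrt'⟩
  by_cases exceptional : N = s ^ 2 ∧ s ≤ 4
  · obtain ⟨rfl, hs4⟩ := exceptional
    exact five_mul_sum_odd_r_sq_le (mem_Icc.2 ⟨by nlinarith, hs4⟩)
  · have bound : 5 * (2 * s * (s + 1)) ≤ 12 * N := by
      rcases le_or_gt s 4 with hs4 | hs5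
      · interval_cases s <;> omega
      · nlinarith
    exact (Nat.mul_le_mul_left 5 (sum_odd_r_le lt_succ_sq)).trans bound

/-- For every real `x ≥ 1`, one has `R_{1,2}(x) = ∑_{x < n ≤ 2x} r(n) ≤ 4.8x`. -/
theorem sum_r_Ioc_le (x : ℝ) (hx : 1 ≤ x) :
    (∑ n ∈ Finset.Ioc ⌊x⌋₊ ⌊2 * x⌋₊, (r n : ℝ)) ≤ 4.8 * x := by
  have floor_half : ⌊2 * x⌋₊ / 2 = ⌊x⌋₊ := by
    rw [← Nat.floor_div_ofNat, mul_div_cancel_left₀ x two_ne_zero]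
  have two_le_floor : 2 ≤ ⌊2 * x⌋₊ := Nat.le_floor (by push_cast; linarith)
  have nat_bound : 5 * ∑ n ∈ Ioc ⌊x⌋₊ ⌊2 * x⌋₊, r n ≤ 12 * ⌊2 * x⌋₊ := by
    rw [← floor_half, sum_Ioc_half_eq_sum_odd r_two_mul]
    exact five_mul_sum_odd_r_le two_le_floor
  have real_bound : (5 : ℝ) * ∑ n ∈ Ioc ⌊x⌋₊ ⌊2 * x⌋₊, (r n : ℝ) ≤ 12 * (⌊2 * x⌋₊ : ℝ) := by
    exact_mod_cast nat_bound
  have floor_le : (⌊2 * x⌋₊ : ℝ) ≤ 2 * x := Nat.floor_le (by linarith)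
  linarith
end

section
/- For every positive integer n, one has r(n)² ≤ Σ_{d | n} r(d)·r(n/d), where the sum runs over all positive divisors d of n. -/
/-!
Two Gaussian integers `x`, `y` of norm `n` satisfy `x * star x = y * star y`. Dividing by
`g = gcd x y`, the coprime cofactors `a`, `b` satisfy `a * star a = b * star b`, whence `star b` is
associated to `a`. So `x = c * star b` and `y = g * b`, where `c` is associated to `g`. Once gcds
are normalized, `(x, y)` is thus recovered from the factorization `c * star b` of `x`. Hence there
are at most as many pairs `(x, y)` as there are pairs of Gaussian integers whose product has norm
`n`, and sorting the latter by the norm of the first factor gives the sum over divisors.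
-/

section Star

variable {M : Type*}

lemma dvd_star_of_isRelPrime_of_mul_star_eq [CommMonoid M] [DecompositionMonoid M] [StarMul M]
    {a b : M} (hab : IsRelPrime a b) (h : a * star a = b * star b) : a ∣ star b :=
  hab.dvd_of_dvd_mul_left ⟨star a, h.symm⟩

variable [CommMonoidWithZero M]

lemma associated_star_of_isRelPrime_of_mul_star_eq [IsCancelMulZero M] [DecompositionMonoid M]
    [StarMul M] {a b : M} (hab : IsRelPrime a b) (h : a * star a = b * star b) :
    Associated (star b) a := by
  have b_dvd : b ∣ star a := dvd_star_of_isRelPrime_of_mul_star_eq hab.symm h.symm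
  have star_b_dvd : star b ∣ a := by simpa using map_dvd (starMulAut (R := M)) b_dvd
  exact associated_of_dvd_dvd star_b_dvd (dvd_star_of_isRelPrime_of_mul_star_eq hab h)

lemma mul_star_eq_mul_star_of_mul_left [IsCancelMulZero M] [StarMul M] {g a b : M} (hg : g ≠ 0)
    (h : g * a * star (g * a) = g * b * star (g * b)) : a * star a = b * star b := by
  have star_g_ne_zero : star g ≠ 0 := (map_ne_zero_iff _ (starMulAut (R := M)).injective).2 hg
  simp only [star_mul', mul_mul_mul_comm g _ (star g)] at h
  exact mul_left_cancel₀ (mul_ne_zero hg star_g_ne_zero) h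

lemma exists_mul_eq_and_normalize_mul_star_eq [NormalizedGCDMonoid M] [StarMul M] {x y : M}
    (h : x * star x = y * star y) : ∃ c a : M, c * a = x ∧ normalize c * star a = y := by
  have : IsCancelMulZero M := IsGCDMonoid.isCancelMulZero M
  obtain ⟨a, b, hx, hy, hab⟩ := extract_gcd x y
  by_cases hg : gcd x y = 0
  · obtain ⟨rfl, rfl⟩ := (gcd_eq_zero_iff x y).1 hg
    exact ⟨0, 0, by simp, by simp⟩
  have cofactors_eq : a * star a = b * star b :=
    mul_star_eq_mul_star_of_mul_left hg (by rwa [← hx, ← hy])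
  obtain ⟨u, hu⟩ := associated_star_of_isRelPrime_of_mul_star_eq
    (gcd_isUnit_iff_isRelPrime.1 hab) cofactors_eq
  have normalize_eq : normalize (gcd x y * u) = gcd x y := by
    rw [normalize_eq_normalize_iff_associated.2 (associated_mul_unit_left _ _ u.isUnit),
      normalize_gcd]
  refine ⟨gcd x y * u, star b, ?_, ?_⟩
  · rw [mul_assoc, mul_comm (u : M), hu, ← hx]
  · rw [normalize_eq, star_star, ← hy]

lemma ncard_sq_le_ncard_setOf_mul_mem [IsGCDMonoid M] [StarMul M] {s : Set M}
    (hs : ∀ x ∈ s, ∀ y ∈ s, x * star x = y * star y) (hfin : {p : M × M | p.1 * p.2 ∈ s}.Finite) :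
    s.ncard ^ 2 ≤ {p : M × M | p.1 * p.2 ∈ s}.ncard := by
  obtain ⟨_⟩ : Nonempty (NormalizedGCDMonoid M) := inferInstance
  let recoverPair (p : M × M) : M × M := (p.1 * p.2, normalize p.1 * star p.2)
  have subset_image : s ×ˢ s ⊆ recoverPair '' {p | p.1 * p.2 ∈ s} := by
    rintro ⟨x, y⟩ ⟨hx, hy⟩
    obtain ⟨c, a, rfl, rfl⟩ := exists_mul_eq_and_normalize_mul_star_eq (hs x hx y hy)
    exact ⟨(c, a), hx, rfl⟩
  calc s.ncard ^ 2 = (s ×ˢ s).ncard := by rw [Set.ncard_prod, sq]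
    _ ≤ (recoverPair '' {p | p.1 * p.2 ∈ s}).ncard :=
      Set.ncard_le_ncard subset_image (hfin.image _)
    _ ≤ {p : M × M | p.1 * p.2 ∈ s}.ncard := Set.ncard_image_le hfin

end Star

lemma setOf_mul_mem_preimage_eq_biUnion_divisors {M : Type*} [Mul M] (f : M →ₙ* ℕ) {n : ℕ}
    (hn : n ≠ 0) :
    {p : M × M | p.1 * p.2 ∈ f ⁻¹' {n}} =
      ⋃ d ∈ n.divisors, (f ⁻¹' {d}) ×ˢ (f ⁻¹' {n / d}) := by
  ext ⟨c, a⟩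
  simp only [Set.mem_ofPred_eq, Set.mem_preimage, Set.mem_singleton_iff, map_mul, Set.mem_iUnion,
    Set.mem_prod, exists_prop, Nat.mem_divisors]
  constructor
  · rintro rfl
    exact ⟨f c, ⟨dvd_mul_right _ _, hn⟩, rfl,
      (Nat.mul_div_cancel_left _ (Nat.pos_of_ne_zero (left_ne_zero_of_mul hn))).symm⟩
  · rintro ⟨d, ⟨hd, -⟩, hc, ha⟩
    rw [hc, ha, Nat.mul_div_cancel' hd]

theorem r_sq_le_sum_divisors_general {M : Type*} [CommMonoidWithZero M] [IsGCDMonoid M] [StarMul M]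
    (f : M →ₙ* ℕ) (hf : ∀ x y, f x = f y → x * star x = y * star y)
    (hfin : ∀ m ≠ 0, (f ⁻¹' {m}).Finite) {n : ℕ} (hn : n ≠ 0) :
    (f ⁻¹' {n}).ncard ^ 2 ≤ ∑ d ∈ n.divisors, (f ⁻¹' {d}).ncard * (f ⁻¹' {n / d}).ncard := by
  have factorizations_eq := setOf_mul_mem_preimage_eq_biUnion_divisors f hn
  have factorizations_finite : {p : M × M | p.1 * p.2 ∈ f ⁻¹' {n}}.Finite := by
    rw [factorizations_eq]
    refine n.divisors.finite_toSet.biUnion fun d hd ↦ ?_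
    have hd_dvd : d ∣ n := Nat.dvd_of_mem_divisors hd
    exact (hfin d (ne_zero_of_dvd_ne_zero hn hd_dvd)).prod
      (hfin _ (Nat.div_ne_zero_iff_of_dvd hd_dvd |>.2 ⟨hn, ne_zero_of_dvd_ne_zero hn hd_dvd⟩))
  calc (f ⁻¹' {n}).ncard ^ 2
      ≤ {p : M × M | p.1 * p.2 ∈ f ⁻¹' {n}}.ncard :=
        ncard_sq_le_ncard_setOf_mul_mem (fun x hx y hy ↦ hf x y (hx.trans hy.symm))
          factorizations_finite
    _ ≤ ∑ d ∈ n.divisors, ((f ⁻¹' {d}) ×ˢ (f ⁻¹' {n / d})).ncard := by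
        rw [factorizations_eq]
        exact Finset.set_ncard_biUnion_le _ _
    _ = ∑ d ∈ n.divisors, (f ⁻¹' {d}).ncard * (f ⁻¹' {n / d}).ncard := by
        simp only [Set.ncard_prod]

/-- The norm `z ↦ z * star z` of the Gaussian integers, as a multiplicative map with values in the
natural numbers. -/
def gaussianNatNorm : GaussianInt →ₙ* ℕ where
  toFun z := z.norm.natAbs
  map_mul' z w := by rw [Zsqrtd.norm_mul, Int.natAbs_mul]

lemma natCast_gaussianNatNorm (z : GaussianInt) : (gaussianNatNorm z : ℤ) = z.norm :=
  GaussianInt.abs_natCast_norm z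

lemma mul_star_eq_of_gaussianNatNorm_eq {x y : GaussianInt}
    (h : gaussianNatNorm x = gaussianNatNorm y) : x * star x = y * star y := by
  rw [← Zsqrtd.norm_eq_mul_conj, ← Zsqrtd.norm_eq_mul_conj, ← natCast_gaussianNatNorm, h,
    natCast_gaussianNatNorm]

lemma gaussianNatNorm_preimage_eq_image (n : ℕ) :
    gaussianNatNorm ⁻¹' {n} =
      (fun p : ℤ × ℤ ↦ (⟨p.1, p.2⟩ : GaussianInt)) '' {p | p.1 ^ 2 + p.2 ^ 2 = (n : ℤ)} := by
  have mem_iff (z : GaussianInt) : gaussianNatNorm z = n ↔ z.re ^ 2 + z.im ^ 2 = (n : ℤ) := by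
    rw [← Nat.cast_inj (R := ℤ), natCast_gaussianNatNorm, Zsqrtd.norm_def]
    ring_nf
  ext z
  constructor
  · exact fun hz ↦ ⟨(z.re, z.im), (mem_iff z).1 hz, rfl⟩
  · rintro ⟨p, hp, rfl⟩
    exact (mem_iff _).2 hp

lemma finite_setOf_sq_add_sq_eq (n : ℤ) : {p : ℤ × ℤ | p.1 ^ 2 + p.2 ^ 2 = n}.Finite := by
  refine (Set.finite_Icc (-n, -n) (n, n)).subset fun p (hp : p.1 ^ 2 + p.2 ^ 2 = n) ↦ ?_
  have abs_fst_le : |p.1| ≤ n := by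
    linarith [Int.le_self_sq |p.1|, sq_abs p.1, sq_nonneg p.2]
  have abs_snd_le : |p.2| ≤ n := by
    linarith [Int.le_self_sq |p.2|, sq_abs p.2, sq_nonneg p.1]
  rw [abs_le] at abs_fst_le abs_snd_le
  exact ⟨⟨abs_fst_le.1, abs_snd_le.1⟩, ⟨abs_fst_le.2, abs_snd_le.2⟩⟩

lemma finite_gaussianNatNorm_preimage (n : ℕ) : (gaussianNatNorm ⁻¹' {n}).Finite := by
  rw [gaussianNatNorm_preimage_eq_image]
  exact (finite_setOf_sq_add_sq_eq n).image _

lemma ncard_gaussianNatNorm_preimage (n : ℕ) : (gaussianNatNorm ⁻¹' {n}).ncard = r n := by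
  rw [gaussianNatNorm_preimage_eq_image, r]
  refine Set.ncard_image_of_injective _ fun p q h ↦ ?_
  exact Prod.ext (congrArg Zsqrtd.re h) (congrArg Zsqrtd.im h)

/-- For every positive integer `n`, `r(n)² ≤ ∑_{d ∣ n} r(d)·r(n/d)`. -/
theorem r_sq_le_sum_divisors (n : ℕ) (hn : 0 < n) :
    r n ^ 2 ≤ ∑ d ∈ n.divisors, r d * r (n / d) := by
  simpa only [ncard_gaussianNatNorm_preimage] using
    r_sq_le_sum_divisors_general gaussianNatNorm (fun _ _ ↦ mul_star_eq_of_gaussianNatNorm_eq)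
      (fun m _ ↦ finite_gaussianNatNorm_preimage m) hn.ne'
end

section
/- For every real number Z ≥ 1, one has Σ_{1 ≤ n ≤ Z} r(n)/n ≤ 4·log(e·Z). -/
/-!
At most `4 * N` lattice points other than the origin lie in the disc of radius `√N`, that is,
`∑ n ≤ N, r n ≤ 4 * N`. Summation by parts against the weights `1 / n` turns this into
`∑ n ≤ N, r n / n ≤ 4 * (1 + 1 / 2 + ⋯ + 1 / N)`, and the harmonic sum is at most `1 + log N`.

For the count, let `M = ⌊√N⌋`. The square `[-M, M]²` contains the disc's lattice points and has
`4 * M * (M + 1)` points besides the origin, which is enough when `M * (M + 1) ≤ N`. Otherwise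
`N = M ^ 2 + k` with `k < M`. Then `[-(M - 1), M - 1]²` contributes at most `4 * M * (M - 1)`
points, and each of the four sides of `[-M, M]²` at most `2 * ⌊√k⌋ + 1 ≤ M + k` more.
-/

open Finset

theorem sum_range_smul_le_sum_range_smul_of_antitone {R M : Type*} [Ring R] [PartialOrder R]
    [IsOrderedRing R] [AddCommGroup M] [PartialOrder M] [IsOrderedAddMonoid M] [Module R M]
    [PosSMulMono R M] {w : ℕ → R} {f g : ℕ → M} (hw : Antitone w) (hw0 : ∀ n, 0 ≤ w n)
    (hfg : ∀ n, ∑ i ∈ range n, f i ≤ ∑ i ∈ range n, g i) (n : ℕ) :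
    ∑ i ∈ range n, w i • f i ≤ ∑ i ∈ range n, w i • g i := by
  have partial_sum_nonneg (m : ℕ) : 0 ≤ ∑ i ∈ range m, (g i - f i) := by
    rw [sum_sub_distrib, sub_nonneg]
    exact hfg m
  rw [← sub_nonneg, ← sum_sub_distrib]
  simp_rw [← smul_sub]
  rw [sum_range_by_parts, sub_nonneg]
  refine (sum_nonpos fun i _ ↦ ?_).trans (smul_nonneg (hw0 _) (partial_sum_nonneg n))
  exact smul_nonpos_of_nonpos_of_nonneg (sub_nonpos.2 (hw i.le_succ)) (partial_sum_nonneg (i + 1))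

theorem sum_Icc_one_eq_sum_range {M : Type*} [AddCommMonoid M] (f : ℕ → M) (n : ℕ) :
    ∑ i ∈ Icc 1 n, f i = ∑ i ∈ range n, f (i + 1) := by
  rw [range_eq_Ico, sum_Ico_add', zero_add, Ico_add_one_right_eq_Icc]

theorem card_Icc_neg_self (m : ℕ) : #(Icc (-m : ℤ) m) = 2 * m + 1 := by
  rw [Int.card_Icc]; omega

theorem abs_le_of_sq_lt_succ_sq {x : ℤ} {m : ℕ} (h : x ^ 2 < ((m : ℤ) + 1) ^ 2) : |x| ≤ m :=
  Int.lt_add_one_iff.1 (abs_lt_of_sq_lt_sq h (by positivity))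

/-- The lattice points `p ≠ 0` of the square `[-m, m]²`. -/
noncomputable def puncturedSquare (m : ℕ) : Finset (ℤ × ℤ) :=
  (Icc (-m : ℤ) m ×ˢ Icc (-m : ℤ) m).erase 0

/-- The lattice points `p ≠ 0` of the closed disc of radius `√N` about the origin. -/
noncomputable def puncturedDisc (N : ℕ) : Finset (ℤ × ℤ) :=
  {p ∈ puncturedSquare N | p.1 ^ 2 + p.2 ^ 2 ≤ (N : ℤ)}

/-- The lattice points on the four sides of the square `[-M, M]²` at distance at most `s` from the
midpoint of a side. Together with `puncturedSquare (M - 1)` they cover the punctured disc of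
a radius between `M` and `M + 1`, once `s` is large enough. -/
noncomputable def caps (M s : ℕ) : Finset (ℤ × ℤ) :=
  ({(M : ℤ), -(M : ℤ)} ×ˢ Icc (-s : ℤ) s) ∪ (Icc (-s : ℤ) s ×ˢ {(M : ℤ), -(M : ℤ)})

theorem mem_puncturedSquare {m : ℕ} {p : ℤ × ℤ} :
    p ∈ puncturedSquare m ↔ p ≠ 0 ∧ |p.1| ≤ m ∧ |p.2| ≤ m := by
  simp only [puncturedSquare, mem_erase, mem_product, mem_Icc, abs_le]

theorem card_puncturedSquare (m : ℕ) : #(puncturedSquare m) = 4 * (m * (m + 1)) := by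
  rw [puncturedSquare, card_erase_of_mem (by simp), card_product, card_Icc_neg_self,
    Nat.sub_eq_iff_eq_add (by nlinarith)]
  ring

theorem mem_caps {M s : ℕ} {p : ℤ × ℤ} :
    p ∈ caps M s ↔ |p.1| = M ∧ |p.2| ≤ s ∨ |p.1| ≤ s ∧ |p.2| = M := by
  simp only [caps, mem_union, mem_product, mem_insert, mem_singleton, mem_Icc, abs_le,
    abs_eq (Int.natCast_nonneg M)]

theorem card_caps_le (M s : ℕ) : #(caps M s) ≤ 4 * (2 * s + 1) := by
  calc #(caps M s)
      ≤ #{(M : ℤ), -(M : ℤ)} * (2 * s + 1) + (2 * s + 1) * #{(M : ℤ), -(M : ℤ)} := by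
        rw [caps]
        grw [card_union_le, card_product, card_product, card_Icc_neg_self]
    _ ≤ 2 * (2 * s + 1) + (2 * s + 1) * 2 := by gcongr <;> exact card_le_two
    _ = 4 * (2 * s + 1) := by ring

theorem mem_puncturedDisc {N : ℕ} {p : ℤ × ℤ} :
    p ∈ puncturedDisc N ↔ p ≠ 0 ∧ p.1 ^ 2 + p.2 ^ 2 ≤ N := by
  rw [puncturedDisc, mem_filter, mem_puncturedSquare]
  refine ⟨fun h ↦ ⟨h.1.1, h.2⟩, fun h ↦ ⟨⟨h.1, ?_, ?_⟩, h.2⟩⟩ <;>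
    exact abs_le_of_sq_lt_succ_sq (by nlinarith [h.2, sq_nonneg p.1, sq_nonneg p.2])

theorem puncturedDisc_subset_puncturedSquare {N M : ℕ} (hN : N < (M + 1) ^ 2) :
    puncturedDisc N ⊆ puncturedSquare M := by
  intro p hp
  obtain ⟨hp0, hpN⟩ := mem_puncturedDisc.1 hp
  zify at hN
  exact mem_puncturedSquare.2 ⟨hp0, abs_le_of_sq_lt_succ_sq (by nlinarith [sq_nonneg p.2]),
    abs_le_of_sq_lt_succ_sq (by nlinarith [sq_nonneg p.1])⟩

theorem puncturedDisc_subset_union_caps {N m s : ℕ} (hm : N < (m + 2) ^ 2)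
    (hs : N < (m + 1) ^ 2 + (s + 1) ^ 2) :
    puncturedDisc N ⊆ puncturedSquare m ∪ caps (m + 1) s := by
  intro p hp
  obtain ⟨hp0, hx, hy⟩ := mem_puncturedSquare.1 (puncturedDisc_subset_puncturedSquare hm hp)
  have hpN := (mem_puncturedDisc.1 hp).2
  have cap_le {x y : ℤ} (hx : |x| = (m + 1 : ℕ)) (hxy : x ^ 2 + y ^ 2 ≤ N) : |y| ≤ s := by
    zify at hs
    rw [← sq_abs x, hx] at hxy
    push_cast at hxy
    exact abs_le_of_sq_lt_succ_sq (by linarith)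
  rw [mem_union, mem_puncturedSquare, mem_caps]
  by_cases hx' : |p.1| = (m + 1 : ℕ)
  · exact .inr (.inl ⟨hx', cap_le hx' hpN⟩)
  by_cases hy' : |p.2| = (m + 1 : ℕ)
  · exact .inr (.inr ⟨cap_le hy' (by linarith), hy'⟩)
  · exact .inl ⟨hp0, by omega, by omega⟩

theorem card_puncturedDisc_le (N : ℕ) : #(puncturedDisc N) ≤ 4 * N := by
  obtain hN | hN := le_or_gt (N.sqrt * (N.sqrt + 1)) N
  · calc #(puncturedDisc N) ≤ #(puncturedSquare N.sqrt) :=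
          card_le_card (puncturedDisc_subset_puncturedSquare N.lt_succ_sqrt')
      _ ≤ 4 * N := by rw [card_puncturedSquare]; gcongr
  · obtain ⟨m, hm⟩ : ∃ m, N.sqrt = m + 1 :=
      Nat.exists_eq_succ_of_ne_zero fun h ↦ by simp [h] at hN
    obtain ⟨k, hk⟩ : ∃ k, N = (m + 1) ^ 2 + k :=
      Nat.exists_eq_add_of_le (hm ▸ N.sqrt_le')
    have hkm : k < m + 1 := by rw [hm] at hN; nlinarith
    have side_le : 2 * k.sqrt + 1 ≤ m + 1 + k := by linarith [k.sqrt_le_self]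
    calc #(puncturedDisc N) ≤ #(puncturedSquare m ∪ caps (m + 1) k.sqrt) := by
          refine card_le_card (puncturedDisc_subset_union_caps ?_ ?_)
          · simpa only [hm] using N.lt_succ_sqrt'
          · rw [hk]; gcongr; exact k.lt_succ_sqrt'
      _ ≤ 4 * (m * (m + 1)) + 4 * (2 * k.sqrt + 1) := by
          grw [card_union_le, card_puncturedSquare, card_caps_le]
      _ ≤ 4 * N := by rw [hk]; linarith

theorem r_eq_card_filter_puncturedDisc {n N : ℕ} (hn : n ∈ Icc 1 N) :
    r n = #{p ∈ puncturedDisc N | p.1.natAbs ^ 2 + p.2.natAbs ^ 2 = n} := by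
  obtain ⟨hn1, hnN⟩ := mem_Icc.1 hn
  rw [r, ← Set.ncard_coe_finset]
  congr 1
  ext p
  have natAbs_iff : p.1.natAbs ^ 2 + p.2.natAbs ^ 2 = n ↔ p.1 ^ 2 + p.2 ^ 2 = (n : ℤ) := by
    zify; simp only [sq_abs]
  simp only [Set.mem_ofPred_eq, coe_filter, mem_puncturedDisc, natAbs_iff]
  refine ⟨fun hp ↦ ⟨⟨?_, by omega⟩, hp⟩, fun hp ↦ hp.2⟩
  rintro rfl
  exact Nat.pos_iff_ne_zero.1 hn1 (by simpa using hp.symm)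

theorem sum_r_eq_card_puncturedDisc (N : ℕ) : ∑ n ∈ Icc 1 N, r n = #(puncturedDisc N) := by
  rw [sum_congr rfl fun n hn ↦ r_eq_card_filter_puncturedDisc hn]
  refine (card_eq_sum_card_fiberwise fun p hp ↦ ?_).symm
  obtain ⟨hp0, hpN⟩ := mem_puncturedDisc.1 hp
  rw [coe_Icc, Set.mem_Icc]
  refine ⟨?_, by zify; simpa only [sq_abs] using hpN⟩
  contrapose! hp0
  simpa [Prod.ext_iff] using hp0

theorem sum_r_le (N : ℕ) : ∑ n ∈ Icc 1 N, r n ≤ 4 * N :=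
  (sum_r_eq_card_puncturedDisc N).trans_le (card_puncturedDisc_le N)

theorem sum_r_div_le_four_mul_harmonic (N : ℕ) :
    ∑ n ∈ Icc 1 N, (r n : ℝ) / n ≤ 4 * harmonic N := by
  have inv_antitone : Antitone fun i : ℕ ↦ ((i + 1 : ℕ) : ℝ)⁻¹ := fun i j hij ↦ by
    dsimp only; gcongr
  have partial_sum_le (n : ℕ) : ∑ i ∈ range n, (r (i + 1) : ℝ) ≤ ∑ _i ∈ range n, 4 := by
    rw [← sum_Icc_one_eq_sum_range fun i ↦ (r i : ℝ), sum_const, card_range, nsmul_eq_mul]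
    exact_mod_cast (sum_r_le n).trans_eq (mul_comm 4 n)
  calc ∑ n ∈ Icc 1 N, (r n : ℝ) / n
      = ∑ i ∈ range N, ((i + 1 : ℕ) : ℝ)⁻¹ • (r (i + 1) : ℝ) := by
        simp only [sum_Icc_one_eq_sum_range, smul_eq_mul, div_eq_inv_mul]
    _ ≤ ∑ i ∈ range N, ((i + 1 : ℕ) : ℝ)⁻¹ • 4 :=
        sum_range_smul_le_sum_range_smul_of_antitone inv_antitone (fun _ ↦ by positivity)
          partial_sum_le N
    _ = 4 * harmonic N := by
        simp only [harmonic, smul_eq_mul, ← sum_mul, mul_comm, Rat.cast_sum, Rat.cast_inv,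
          Rat.cast_natCast]

/-- For every real `Z ≥ 1`, one has `∑_{1 ≤ n ≤ Z} r(n)/n ≤ 4·log(e·Z)`. -/
theorem sum_r_div_le (Z : ℝ) (hZ : 1 ≤ Z) :
    (∑ n ∈ Finset.Icc 1 ⌊Z⌋₊, (r n : ℝ) / n) ≤ 4 * Real.log (Real.exp 1 * Z) := by
  calc ∑ n ∈ Icc 1 ⌊Z⌋₊, (r n : ℝ) / n ≤ 4 * harmonic ⌊Z⌋₊ := sum_r_div_le_four_mul_harmonic _
    _ ≤ 4 * (1 + Real.log Z) := by gcongr; exact harmonic_floor_le_one_add_log Z hZ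
    _ = 4 * Real.log (Real.exp 1 * Z) := by
      rw [Real.log_mul (Real.exp_ne_zero 1) (by positivity), Real.log_exp]
end

section
/- Let a > 0, and for m = (m₁,m₂,m₃) ∈ ℤ³ set g*(m) := max(√(a(m₁² + m₂²)), |m₃|/a), and g₀ := min(√a, 1/a). Then for every real Z > 0, Σ_{m ∈ ℤ³, 0 < g*(m) ≤ Z} (g*(m))^{−3} ≤ (42/g₀³)·log₊(1.4·Z/g₀), where log₊(w) := max(log w, 0). -/
/-!
Since `g*(m) ≥ g₀ · max(√(m₁² + m₂²), |m₃|)`, the nonzero `m` with `g*(m) ≤ t` lie in a cylinder of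
radius and half-height `u = t / g₀`. Quarter turns carry the nonzero lattice points of its base disc
into a single quadrant, which holds at most `u²` of them; hence for `u ≥ 1` the cylinder has at most
`(4u² + 1)(2u + 1) - 1 ≤ 14u³` nonzero points. Summing `g*(m)⁻³` by parts against this count gives
`(14 / g₀³)(1 + 3 log(Z / g₀))`, and `1 / 3 ≤ log 1.4` absorbs the constant term.
-/

open Finset MeasureTheory

section AbelSummation

variable {α : Type*} {T : Finset α} {f : α → ℝ} {w : ℝ → ℝ} {r Z C p : ℝ}

lemma card_filter_lt_mul_eq_sum_indicator (T : Finset α) (f : α → ℝ) (w : ℝ → ℝ) (t : ℝ) :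
    #{m ∈ T | f m < t} * w t = ∑ m ∈ T, (Set.Ioi (f m)).indicator w t := by
  simp only [Set.indicator_apply, Set.mem_Ioi, ← sum_filter, sum_const, nsmul_eq_mul]

lemma intervalIntegrable_indicator_Ioi (hw : IntervalIntegrable w volume r Z) (y : ℝ) :
    IntervalIntegrable ((Set.Ioi y).indicator w) volume r Z := by
  rw [intervalIntegrable_iff] at hw ⊢
  exact hw.indicator measurableSet_Ioi

lemma intervalIntegrable_card_filter_lt_mul (T : Finset α) (f : α → ℝ)
    (hw : IntervalIntegrable w volume r Z) :
    IntervalIntegrable (fun t ↦ #{m ∈ T | f m < t} * w t) volume r Z := by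
  simpa only [card_filter_lt_mul_eq_sum_indicator, Finset.sum_fn] using
    IntervalIntegrable.sum T fun m _ ↦ intervalIntegrable_indicator_Ioi hw (f m)

lemma integral_card_filter_lt_mul (hw : IntervalIntegrable w volume r Z)
    (hf : ∀ m ∈ T, f m ∈ Set.Icc r Z) :
    ∫ t in r..Z, #{m ∈ T | f m < t} * w t = ∑ m ∈ T, ∫ t in f m..Z, w t := by
  simp only [card_filter_lt_mul_eq_sum_indicator]
  rw [intervalIntegral.integral_finsetSum fun m _ ↦ intervalIntegrable_indicator_Ioi hw (f m)]
  refine sum_congr rfl fun m hm ↦ ?_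
  obtain ⟨hrm, hmZ⟩ := hf m hm
  rw [intervalIntegral.integral_of_le (hrm.trans hmZ), intervalIntegral.integral_of_le hmZ,
    setIntegral_indicator measurableSet_Ioi, Set.Ioc_inter_Ioi, max_eq_right hrm]

lemma integral_mul_rpow_neg_sub_one (hr : 0 < r) (hZ : 0 < Z) (p : ℝ) :
    ∫ t in r..Z, p * t ^ (-p - 1) = r ^ (-p) - Z ^ (-p) := by
  rcases eq_or_ne p 0 with rfl | hp
  · simp
  · rw [intervalIntegral.integral_const_mul,
      integral_rpow (.inr ⟨by simpa using hp, Set.notMem_uIcc_of_lt hr hZ⟩), sub_add_cancel]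
    field_simp
    ring

lemma sum_rpow_neg_eq (hr : 0 < r) (hrZ : r ≤ Z) (hf : ∀ m ∈ T, f m ∈ Set.Icc r Z) (p : ℝ) :
    ∑ m ∈ T, f m ^ (-p) =
      #T * Z ^ (-p) + ∫ t in r..Z, #{m ∈ T | f m < t} * (p * t ^ (-p - 1)) := by
  have hZ : 0 < Z := hr.trans_le hrZ
  have hw : IntervalIntegrable (fun t ↦ p * t ^ (-p - 1)) volume r Z :=
    (intervalIntegral.intervalIntegrable_rpow (.inr (Set.notMem_uIcc_of_lt hr hZ))).const_mul p
  rw [integral_card_filter_lt_mul hw hf, ← nsmul_eq_mul, ← sum_const, ← sum_add_distrib]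
  refine sum_congr rfl fun m hm ↦ ?_
  rw [integral_mul_rpow_neg_sub_one (hr.trans_le (hf m hm).1) hZ, add_sub_cancel]

theorem sum_rpow_neg_le_of_card_filter_le (hr : 0 < r) (hrZ : r ≤ Z) (hp : 0 ≤ p)
    (hf : ∀ m ∈ T, f m ∈ Set.Icc r Z)
    (hcard : ∀ t ∈ Set.Icc r Z, #{m ∈ T | f m ≤ t} ≤ C * t ^ p) :
    ∑ m ∈ T, f m ^ (-p) ≤ C * (1 + p * Real.log (Z / r)) := by
  have hZ : 0 < Z := hr.trans_le hrZ
  have h0 : (0 : ℝ) ∉ Set.uIcc r Z := Set.notMem_uIcc_of_lt hr hZ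
  have hboundary : #T * Z ^ (-p) ≤ C := by
    have hT := hcard Z ⟨hrZ, le_rfl⟩
    rwa [filter_true_of_mem fun m hm ↦ (hf m hm).2, ← div_le_iff₀ (by positivity),
      div_eq_mul_inv, ← Real.rpow_neg hZ.le] at hT
  have hdensity : ∀ t ∈ Set.Icc r Z,
      #{m ∈ T | f m < t} * (p * t ^ (-p - 1)) ≤ C * p * t⁻¹ := fun t ht ↦ by
    have ht0 : 0 < t := hr.trans_le ht.1
    calc #{m ∈ T | f m < t} * (p * t ^ (-p - 1))
        ≤ #{m ∈ T | f m ≤ t} * (p * t ^ (-p - 1)) := by gcongr with m; exact le_of_lt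
      _ ≤ C * t ^ p * (p * t ^ (-p - 1)) := by gcongr; exact hcard t ht
      _ = C * p * t⁻¹ := by
          rw [Real.rpow_sub_one ht0.ne', Real.rpow_neg ht0.le]
          field_simp
  have hw : IntervalIntegrable (fun t ↦ p * t ^ (-p - 1)) volume r Z :=
    (intervalIntegral.intervalIntegrable_rpow (.inr h0)).const_mul p
  have hinv : IntervalIntegrable (fun t ↦ C * p * t⁻¹) volume r Z :=
    (intervalIntegrable_inv_iff.2 (.inr h0)).const_mul _
  calc ∑ m ∈ T, f m ^ (-p)
      = #T * Z ^ (-p) + ∫ t in r..Z, #{m ∈ T | f m < t} * (p * t ^ (-p - 1)) :=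
        sum_rpow_neg_eq hr hrZ hf p
    _ ≤ C + ∫ t in r..Z, C * p * t⁻¹ :=
        add_le_add hboundary <| intervalIntegral.integral_mono_on hrZ
          (intervalIntegrable_card_filter_lt_mul T f hw) hinv hdensity
    _ = C * (1 + p * Real.log (Z / r)) := by
        rw [intervalIntegral.integral_const_mul, integral_inv_of_pos hr hZ]
        ring

end AbelSummation

section LatticePoints

variable {Q : ℕ}

lemma card_le_of_quadrant_sq_add_sq_le {T : Finset (ℤ × ℤ)}
    (hquad : ∀ p ∈ T, 0 < p.1 ∧ 0 ≤ p.2) (hQ : ∀ p ∈ T, p.1 ^ 2 + p.2 ^ 2 ≤ Q) : #T ≤ Q := by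
  set k := Nat.sqrt Q
  have hk : k ^ 2 ≤ Q := Nat.sqrt_le' Q
  have hk_succ : (Q : ℤ) < (k + 1) ^ 2 := mod_cast Nat.lt_succ_sqrt' Q
  -- The row `y = k` holds at most `Q - k²` points since `x ≤ x² ≤ Q - k²` there; the rest of the
  -- quadrant lies in a `k × k` box.
  have hsub : T ⊆ Icc 1 (k : ℤ) ×ˢ Ico 0 (k : ℤ) ∪ Icc 1 ((Q - k ^ 2 : ℕ) : ℤ) ×ˢ {(k : ℤ)} := by
    intro ⟨x, y⟩ hp
    obtain ⟨hx, hy⟩ : 0 < x ∧ 0 ≤ y := hquad _ hp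
    have hxy : x ^ 2 + y ^ 2 ≤ Q := hQ _ hp
    have hxk : x ≤ k := by nlinarith
    have hyk : y ≤ k := by nlinarith
    simp only [mem_union, mem_product, mem_Icc, mem_Ico, mem_singleton]
    rcases hyk.lt_or_eq with hlt | rfl
    · exact .inl ⟨⟨hx, hxk⟩, hy, hlt⟩
    · refine .inr ⟨⟨hx, ?_⟩, rfl⟩
      push_cast [hk]
      linarith [Int.le_self_sq x]
  calc #T ≤ k * k + (Q - k ^ 2) := by
        simpa using (card_le_card hsub).trans (card_union_le _ _)
    _ = Q := by rw [← sq, Nat.add_sub_cancel' hk]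

theorem card_le_four_mul_of_sq_add_sq_le {T : Finset (ℤ × ℤ)} (hT : 0 ∉ T)
    (hQ : ∀ p ∈ T, p.1 ^ 2 + p.2 ^ 2 ≤ Q) : #T ≤ 4 * Q := by
  have hrotate (ρ : ℤ × ℤ → ℤ × ℤ) (hinj : ρ.Injective)
      (hρ : ∀ p, (ρ p).1 ^ 2 + (ρ p).2 ^ 2 = p.1 ^ 2 + p.2 ^ 2) :
      #{p ∈ T | 0 < (ρ p).1 ∧ 0 ≤ (ρ p).2} ≤ Q := by
    rw [← card_image_of_injective _ hinj]
    refine card_le_of_quadrant_sq_add_sq_le (forall_mem_image.2 fun p hp ↦ ?_)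
      (forall_mem_image.2 fun p hp ↦ ?_)
    · exact (mem_filter.1 hp).2
    · exact (hρ p).trans_le (hQ p (mem_of_mem_filter p hp))
  have hcover : T ⊆ ({p ∈ T | 0 < p.1 ∧ 0 ≤ p.2} ∪ {p ∈ T | 0 < p.2 ∧ 0 ≤ -p.1}) ∪
      ({p ∈ T | 0 < -p.1 ∧ 0 ≤ -p.2} ∪ {p ∈ T | 0 < -p.2 ∧ 0 ≤ p.1}) := fun p hp ↦ by
    have hp0 : p ≠ (0, 0) := ne_of_mem_of_not_mem hp hT
    rw [Ne, Prod.ext_iff] at hp0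
    simp only [mem_union, mem_filter, hp, true_and]
    omega
  have h₀ := hrotate id Function.injective_id fun _ ↦ rfl
  have h₁ := hrotate (fun p ↦ (p.2, -p.1)) (fun p q h ↦ by grind) fun p ↦ by ring
  have h₂ := hrotate (fun p ↦ (-p.1, -p.2)) (fun p q h ↦ by grind) fun p ↦ by ring
  have h₃ := hrotate (fun p ↦ (-p.2, p.1)) (fun p q h ↦ by grind) fun p ↦ by ring
  calc #T ≤ (Q + Q) + (Q + Q) := (card_le_card hcover).trans <|
        (card_union_le _ _).trans <| add_le_add
          ((card_union_le _ _).trans (add_le_add h₀ h₁))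
          ((card_union_le _ _).trans (add_le_add h₂ h₃))
    _ = 4 * Q := by ring

theorem card_lt_of_sq_add_sq_le_of_abs_le {k : ℕ} {T : Finset (ℤ × ℤ × ℤ)} (hT : 0 ∉ T)
    (hQ : ∀ m ∈ T, m.1 ^ 2 + m.2.1 ^ 2 ≤ Q) (hk : ∀ m ∈ T, |m.2.2| ≤ k) :
    #T < (4 * Q + 1) * (2 * k + 1) := by
  set D : Finset (ℤ × ℤ) := (T.image fun m ↦ (m.1, m.2.1)).erase 0
  have hD : #D ≤ 4 * Q := by
    refine card_le_four_mul_of_sq_add_sq_le (notMem_erase 0 _) fun p hp ↦ ?_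
    obtain ⟨m, hm, rfl⟩ := mem_image.1 (mem_of_mem_erase hp)
    exact hQ m hm
  set cylinder : Finset ((ℤ × ℤ) × ℤ) := insert 0 D ×ˢ Icc (-k : ℤ) k
  have hcylinder : #cylinder ≤ (4 * Q + 1) * (2 * k + 1) := by
    have hIcc : #(Icc (-k : ℤ) k) = 2 * k + 1 := by rw [Int.card_Icc]; omega
    rw [card_product, hIcc]
    gcongr
    exact (card_insert_le 0 D).trans (by gcongr)
  have hsub : T.map (Equiv.prodAssoc ℤ ℤ ℤ).symm.toEmbedding ⊂ cylinder := by
    refine (ssubset_iff_of_subset fun q hq ↦ ?_).2 ⟨0, ?_, ?_⟩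
    · obtain ⟨m, hm, rfl⟩ := mem_map.1 hq
      exact mem_product.2 ⟨insert_erase_subset 0 _ (mem_image_of_mem _ hm),
        mem_Icc.2 (abs_le.1 (hk m hm))⟩
    · simp [cylinder]
    · exact mem_map_equiv.not.2 hT
  calc #T = #(T.map (Equiv.prodAssoc ℤ ℤ ℤ).symm.toEmbedding) := (card_map _).symm
    _ < #cylinder := card_lt_card hsub
    _ ≤ (4 * Q + 1) * (2 * k + 1) := hcylinder

/-- The norm on `ℤ³` whose ball of radius `t` is the cylinder of radius and half-height `t` around
the third axis, used to bound the functions `g*` from below. -/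
noncomputable def cylNorm (m : ℤ × ℤ × ℤ) : ℝ :=
  max √((m.1 : ℝ) ^ 2 + (m.2.1 : ℝ) ^ 2) |(m.2.2 : ℝ)|

theorem card_le_of_cylNorm_le {t : ℝ} {T : Finset (ℤ × ℤ × ℤ)} (ht : 1 ≤ t) (hT : 0 ∉ T)
    (hle : ∀ m ∈ T, cylNorm m ≤ t) : #T ≤ 14 * t ^ 3 := by
  have ht0 : 0 ≤ t := zero_le_one.trans ht
  set Q := ⌊t ^ 2⌋₊
  set k := ⌊t⌋₊
  have hQ : ∀ m ∈ T, m.1 ^ 2 + m.2.1 ^ 2 ≤ Q := fun m hm ↦ by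
    rw [Int.natCast_floor_eq_floor (by positivity), Int.le_floor]
    push_cast
    exact (Real.sqrt_le_left ht0).1 (max_le_iff.1 (hle m hm)).1
  have hk : ∀ m ∈ T, |m.2.2| ≤ k := fun m hm ↦ by
    rw [Int.natCast_floor_eq_floor ht0, Int.le_floor]
    push_cast
    exact (max_le_iff.1 (hle m hm)).2
  have hcard : (#T : ℝ) + 1 ≤ (4 * Q + 1) * (2 * k + 1) :=
    mod_cast card_lt_of_sq_add_sq_le_of_abs_le hT hQ hk
  have hQt : (Q : ℝ) ≤ t ^ 2 := Nat.floor_le (by positivity)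
  have hkt : (k : ℝ) ≤ t := Nat.floor_le ht0
  calc (#T : ℝ) ≤ (4 * Q + 1) * (2 * k + 1) - 1 := le_sub_iff_add_le.2 hcard
    _ ≤ (4 * t ^ 2 + 1) * (2 * t + 1) - 1 := by gcongr
    _ = 8 * t ^ 3 + 4 * t ^ 2 + 2 * t := by ring
    _ ≤ 8 * t ^ 3 + 4 * t ^ 3 + 2 * t ^ 3 := by
        gcongr
        exacts [Nat.le_succ 2, le_self_pow₀ ht three_ne_zero]
    _ = 14 * t ^ 3 := by ring

lemma one_le_cylNorm {m : ℤ × ℤ × ℤ} (hm : m ≠ 0) : 1 ≤ cylNorm m := by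
  rw [cylNorm, le_max_iff, Real.one_le_sqrt]
  by_contra! h
  obtain ⟨hxy, hz⟩ : m.1 ^ 2 + m.2.1 ^ 2 < 1 ∧ |m.2.2| < 1 := mod_cast h
  have eq_zero {x y : ℤ} (h : x ^ 2 + y ^ 2 < 1) : x = 0 :=
    Int.abs_lt_one_iff.1 <| (sq_lt_one_iff_abs_lt_one x).1 (by linarith [sq_nonneg y])
  exact hm <| Prod.ext (eq_zero hxy) <|
    Prod.ext (eq_zero (by rwa [add_comm])) (Int.abs_lt_one_iff.1 hz)

end LatticePoints

section GStar

/-- The function `g*` on `ℤ³`, with `m = (m₁, m₂, m₃)` encoded as `(m.1, m.2.1, m.2.2)`. -/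
noncomputable def gStar (a : ℝ) (m : ℤ × ℤ × ℤ) : ℝ :=
  max √(a * ((m.1 : ℝ) ^ 2 + (m.2.1 : ℝ) ^ 2)) (|(m.2.2 : ℝ)| / a)

/-- The constant `g₀`, the least nonzero value of `g*`, attained at `(1, 0, 0)` or `(0, 0, 1)`. -/
noncomputable def gStarMin (a : ℝ) : ℝ := min √a (1 / a)

variable {a Z : ℝ} {m : ℤ × ℤ × ℤ}

lemma gStarMin_pos (ha : 0 < a) : 0 < gStarMin a :=
  lt_min (Real.sqrt_pos.2 ha) (one_div_pos.2 ha)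

lemma gStarMin_mul_cylNorm_le_gStar (ha : 0 < a) (m : ℤ × ℤ × ℤ) :
    gStarMin a * cylNorm m ≤ gStar a m := by
  rw [cylNorm, gStar, mul_max_of_nonneg _ _ (gStarMin_pos ha).le, Real.sqrt_mul ha.le,
    ← one_div_mul_eq_div]
  gcongr
  exacts [min_le_left _ _, min_le_right _ _]

lemma ne_zero_of_gStar_pos (hm : 0 < gStar a m) : m ≠ 0 := by
  rintro rfl
  simp [gStar] at hm

lemma gStarMin_le_gStar (ha : 0 < a) (hm : m ≠ 0) : gStarMin a ≤ gStar a m :=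
  (le_mul_of_one_le_right (gStarMin_pos ha).le (one_le_cylNorm hm)).trans
    (gStarMin_mul_cylNorm_le_gStar ha m)

theorem card_le_of_gStar_le {t : ℝ} {T : Finset (ℤ × ℤ × ℤ)} (ha : 0 < a) (ht : gStarMin a ≤ t)
    (hT : 0 ∉ T) (hle : ∀ m ∈ T, gStar a m ≤ t) : #T ≤ 14 / gStarMin a ^ 3 * t ^ 3 := by
  have hmin := gStarMin_pos ha
  calc (#T : ℝ) ≤ 14 * (t / gStarMin a) ^ 3 :=
        card_le_of_cylNorm_le ((one_le_div hmin).2 ht) hT fun m hm ↦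
          (le_div_iff₀' hmin).2 ((gStarMin_mul_cylNorm_le_gStar ha m).trans (hle m hm))
    _ = 14 / gStarMin a ^ 3 * t ^ 3 := by ring

theorem sum_gStar_zpow_neg_three_le {T : Finset (ℤ × ℤ × ℤ)} (ha : 0 < a) (hZ : gStarMin a ≤ Z)
    (hT : 0 ∉ T) (hle : ∀ m ∈ T, gStar a m ≤ Z) :
    ∑ m ∈ T, gStar a m ^ (-(3 : ℤ)) ≤
      14 / gStarMin a ^ 3 * (1 + 3 * Real.log (Z / gStarMin a)) := by
  have hcard : ∀ t ∈ Set.Icc (gStarMin a) Z,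
      #{m ∈ T | gStar a m ≤ t} ≤ 14 / gStarMin a ^ 3 * t ^ (3 : ℝ) := fun t ht ↦ by
    rw [Real.rpow_ofNat]
    exact card_le_of_gStar_le ha ht.1 (fun h ↦ hT (mem_of_mem_filter _ h))
      fun m hm ↦ (mem_filter.1 hm).2
  calc ∑ m ∈ T, gStar a m ^ (-(3 : ℤ)) = ∑ m ∈ T, gStar a m ^ (-3 : ℝ) :=
        sum_congr rfl fun m _ ↦ mod_cast (Real.rpow_intCast _ (-3)).symm
    _ ≤ 14 / gStarMin a ^ 3 * (1 + 3 * Real.log (Z / gStarMin a)) :=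
        sum_rpow_neg_le_of_card_filter_le (gStarMin_pos ha) hZ zero_le_three
          (fun m hm ↦ ⟨gStarMin_le_gStar ha (ne_of_mem_of_not_mem hm hT), hle m hm⟩) hcard

end GStar

lemma one_third_le_log_one_point_four : 1 / 3 ≤ Real.log 1.4 := by
  have hexp : Real.exp 1 ≤ 1.4 ^ 3 := Real.exp_one_lt_d9.le.trans (by norm_num)
  have hlog := (Real.le_log_iff_exp_le (by norm_num)).2 hexp
  rw [Real.log_pow] at hlog
  push_cast at hlog
  linarith

lemma one_add_three_mul_log_le {x : ℝ} (hx : 0 < x) :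
    1 + 3 * Real.log x ≤ 3 * Real.log (1.4 * x) := by
  rw [Real.log_mul (by norm_num) hx.ne']
  linarith [one_third_le_log_one_point_four]

/-- For `a > 0`, `g*(m) := max(√(a(m₁²+m₂²)), |m₃|/a)` and `g₀ := min(√a, 1/a)`, one has,
for every `Z > 0`,
`∑_{0 < g*(m) ≤ Z} g*(m)⁻³ ≤ (42/g₀³)·log₊(1.4 Z/g₀)` with `log₊ = max(log, 0)`. -/
theorem sum_gstar_inv_cube_le (a : ℝ) (ha : 0 < a) (Z : ℝ) (hZ : 0 < Z)
    (gs : ℤ × ℤ × ℤ → ℝ)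
    (hgs : ∀ m : ℤ × ℤ × ℤ,
      gs m = max (Real.sqrt (a * ((m.1 : ℝ) ^ 2 + (m.2.1 : ℝ) ^ 2))) (|(m.2.2 : ℝ)| / a))
    (g₀ : ℝ) (hg₀ : g₀ = min (Real.sqrt a) (1 / a)) :
    (∑' m : {m : ℤ × ℤ × ℤ // 0 < gs m ∧ gs m ≤ Z}, (gs (m : ℤ × ℤ × ℤ)) ^ (-(3 : ℤ)))
      ≤ 42 / g₀ ^ 3 * max (Real.log (1.4 * Z / g₀)) 0 := by
  obtain rfl : gs = gStar a := funext hgs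
  obtain rfl : g₀ = gStarMin a := hg₀
  have hmin := gStarMin_pos ha
  refine Real.tsum_le_of_sum_le (fun m ↦ zpow_nonneg m.2.1.le _) fun s ↦ ?_
  rcases s.eq_empty_or_nonempty with rfl | ⟨m₀, -⟩
  · rw [sum_empty]
    positivity
  have hZ_ge : gStarMin a ≤ Z :=
    (gStarMin_le_gStar ha (ne_zero_of_gStar_pos m₀.2.1)).trans m₀.2.2
  calc ∑ m ∈ s, gStar a m ^ (-(3 : ℤ))
      = ∑ m ∈ s.map (.subtype _), gStar a m ^ (-(3 : ℤ)) := by rw [sum_map]; rfl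
    _ ≤ 14 / gStarMin a ^ 3 * (1 + 3 * Real.log (Z / gStarMin a)) :=
        sum_gStar_zpow_neg_three_le ha hZ_ge
          (fun h ↦ ne_zero_of_gStar_pos (property_of_mem_map_subtype s h).1 rfl)
          fun m hm ↦ (property_of_mem_map_subtype s hm).2
    _ ≤ 14 / gStarMin a ^ 3 * (3 * Real.log (1.4 * (Z / gStarMin a))) := by
        gcongr
        exact one_add_three_mul_log_le (by positivity)
    _ = 42 / gStarMin a ^ 3 * Real.log (1.4 * Z / gStarMin a) := by rw [mul_div_assoc]; ring
    _ ≤ 42 / gStarMin a ^ 3 * max (Real.log (1.4 * Z / gStarMin a)) 0 := by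
        gcongr; exact le_max_left _ _
end

section
/- Let a > 0, and for m = (m₁,m₂,m₃) ∈ ℤ³ set g*(m) := max(√(a(m₁² + m₂²)), |m₃|/a), and g₀ := min(√a, 1/a). Then for all reals Z > 0 and α > 3, the series Σ_{m ∈ ℤ³, g*(m) > Z} (g*(m))^{−α} converges and is at most (14α/((α−3)·g₀³))·Z^{3−α}. -/
/-!
Abel summation writes `∑ g*(m)^{-α}` as `∫_Z^∞ α t^{-α-1} #{m : Z < g*(m) < t} dt`, so the bound
follows from the counting estimate `#{m ≠ 0 : g*(m) ≤ t} ≤ 14 (t / g₀)³`. Since `g₀ g*₁ ≤ g*ₐ`, it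
suffices to count for `a = 1`, that is, in the cylinder `m₁² + m₂² ≤ s²`, `|m₃| ≤ s`. With
`k = ⌊s⌋`, the nonzero points of the cube `[-k, k]³` number at most `26 k³`, which is enough when
`2 k² ≤ s²`; otherwise the cylinder misses the four vertical edges of the cube, and what remains
has at most `14 k³` nonzero points.
-/

open Finset MeasureTheory

section AbelSummation

lemma integral_Ioi_rpow_neg_sub_one {β x : ℝ} (hβ : 0 < β) (hx : 0 < x) :
    ∫ t in Set.Ioi x, t ^ (-β - 1) = x ^ (-β) / β := by
  rw [integral_Ioi_rpow_of_lt (by linarith) hx, sub_add_cancel, neg_div_neg_eq]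

variable {ι : Type*} {F : Finset ι} {g : ι → ℝ} {Z α : ℝ}

lemma sum_rpow_neg_eq_integral_card (hZ : 0 < Z) (hα : 0 < α) (hg : ∀ i ∈ F, Z < g i) :
    ∑ i ∈ F, g i ^ (-α) = ∫ t in Set.Ioi Z, #{i ∈ F | g i < t} * (α * t ^ (-α - 1)) := by
  have integrable_indicator (i : ι) : IntegrableOn
      ((Set.Ioi (g i)).indicator fun t ↦ α * t ^ (-α - 1)) (Set.Ioi Z) :=
    ((integrableOn_Ioi_rpow_of_lt (by linarith) hZ).const_mul α).indicator measurableSet_Ioi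
  have rpow_eq_integral : ∀ i ∈ F, g i ^ (-α) =
      ∫ t in Set.Ioi Z, (Set.Ioi (g i)).indicator (fun t ↦ α * t ^ (-α - 1)) t := by
    intro i hi
    rw [setIntegral_indicator measurableSet_Ioi, Set.Ioi_inter_Ioi, sup_eq_right.mpr (hg i hi).le,
      integral_const_mul, integral_Ioi_rpow_neg_sub_one hα (hZ.trans (hg i hi)),
      mul_div_cancel₀ _ hα.ne']
  rw [sum_congr rfl rpow_eq_integral, ← integral_finsetSum _ fun i _ ↦ integrable_indicator i]
  simp only [Set.indicator_apply, Set.mem_Ioi, ← sum_filter, sum_const, nsmul_eq_mul]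

lemma sum_rpow_neg_le_of_card_le {C d : ℝ} (hZ : 0 < Z) (hα : 0 < α) (hd : d < α)
    (hg : ∀ i ∈ F, Z < g i) (hcard : ∀ t, Z < t → #{i ∈ F | g i < t} ≤ C * t ^ d) :
    ∑ i ∈ F, g i ^ (-α) ≤ C * α / (α - d) * Z ^ (d - α) := by
  have mul_rpow_eq {t : ℝ} (ht : 0 < t) :
      C * t ^ d * (α * t ^ (-α - 1)) = C * α * t ^ (-(α - d) - 1) := by
    rw [show -(α - d) - 1 = d + (-α - 1) by ring, Real.rpow_add ht]
    ring
  calc ∑ i ∈ F, g i ^ (-α)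
    _ = ∫ t in Set.Ioi Z, #{i ∈ F | g i < t} * (α * t ^ (-α - 1)) :=
      sum_rpow_neg_eq_integral_card hZ hα hg
    _ ≤ ∫ t in Set.Ioi Z, C * α * t ^ (-(α - d) - 1) := by
      refine integral_mono_of_nonneg ?_
        ((integrableOn_Ioi_rpow_of_lt (by linarith) hZ).const_mul (C * α)) ?_ <;>
        refine ae_restrict_of_forall_mem measurableSet_Ioi fun t ht ↦ ?_
      · have := hZ.trans ht
        positivity
      · have t_pos : 0 < t := hZ.trans ht
        refine le_of_le_of_eq ?_ (mul_rpow_eq t_pos)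
        exact mul_le_mul_of_nonneg_right (hcard t ht) (by positivity)
    _ = C * α / (α - d) * Z ^ (d - α) := by
      rw [integral_const_mul, integral_Ioi_rpow_neg_sub_one (sub_pos.mpr hd) hZ, neg_sub]
      ring

end AbelSummation

section CubeCount

variable {F : Finset (ℤ × ℤ × ℤ)} {k : ℕ}

lemma mem_Icc_neg_natCast_iff {m : ℤ × ℤ × ℤ} :
    m ∈ Icc (-k : ℤ × ℤ × ℤ) k ↔ |m.1| ≤ k ∧ |m.2.1| ≤ k ∧ |m.2.2| ≤ k := by
  simp only [mem_Icc, Prod.le_def, abs_le, Prod.fst_neg, Prod.snd_neg, Prod.fst_natCast,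
    Prod.snd_natCast]
  tauto

lemma card_Icc_neg_natCast_int (k : ℕ) : #(Icc (-k : ℤ) k) = 2 * k + 1 := by
  rw [Int.card_Icc]
  lia

lemma card_Icc_neg_natCast (k : ℕ) : #(Icc (-k : ℤ × ℤ × ℤ) k) = (2 * k + 1) ^ 3 := by
  simp only [card_Icc_prod, Prod.fst_neg, Prod.snd_neg, Prod.fst_natCast, Prod.snd_natCast,
    card_Icc_neg_natCast_int]
  ring

lemma card_le_of_subset_Icc (h0 : 0 ∉ F) (hF : F ⊆ Icc (-k : ℤ × ℤ × ℤ) k) :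
    #F ≤ 26 * k ^ 3 := by
  have insert_subset_cube : insert 0 F ⊆ Icc (-k : ℤ × ℤ × ℤ) k :=
    insert_subset (mem_Icc_neg_natCast_iff.mpr (by simp)) hF
  have card_lt : #F + 1 ≤ (2 * k + 1) ^ 3 := by
    rw [← card_insert_of_notMem h0, ← card_Icc_neg_natCast]
    exact card_le_card insert_subset_cube
  have sq_le_cube : k ^ 2 ≤ k ^ 3 := by
    rcases k.eq_zero_or_pos with rfl | hk
    · rfl
    · exact Nat.pow_le_pow_right hk (by norm_num)
  have le_cube : k ≤ k ^ 3 := Nat.le_self_pow (by norm_num) k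
  linarith

/-- The lattice points on the four vertical edges of the cube `[-k, k]³`; for `k = 0` they all
collapse to the origin. -/
noncomputable def verticalEdges (k : ℕ) : Finset (ℤ × ℤ × ℤ) :=
  {-(k : ℤ), (k : ℤ)} ×ˢ {-(k : ℤ), (k : ℤ)} ×ˢ Icc (-k : ℤ) k

lemma mem_verticalEdges_iff {m : ℤ × ℤ × ℤ} :
    m ∈ verticalEdges k ↔ |m.1| = k ∧ |m.2.1| = k ∧ |m.2.2| ≤ k := by
  simp only [verticalEdges, mem_product, mem_insert, mem_singleton, mem_Icc, ← abs_le,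
    abs_eq (Nat.cast_nonneg k : (0 : ℤ) ≤ k), or_comm]

lemma card_verticalEdges (hk : k ≠ 0) : #(verticalEdges k) = 4 * (2 * k + 1) := by
  have neg_ne_self : -(k : ℤ) ≠ k := by lia
  rw [verticalEdges, card_product, card_product, card_pair neg_ne_self, card_Icc_neg_natCast_int]
  ring

lemma card_le_of_subset_Icc_sdiff_verticalEdges (hk : k ≠ 0) (h0 : 0 ∉ F)
    (hF : F ⊆ Icc (-k : ℤ × ℤ × ℤ) k \ verticalEdges k) : #F ≤ 14 * k ^ 3 := by
  have zero_mem : (0 : ℤ × ℤ × ℤ) ∈ Icc (-k : ℤ × ℤ × ℤ) k \ verticalEdges k := by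
    rw [mem_sdiff, mem_Icc_neg_natCast_iff, mem_verticalEdges_iff]
    simp [(Nat.cast_ne_zero.mpr hk).symm]
  have edges_subset : verticalEdges k ⊆ Icc (-k : ℤ × ℤ × ℤ) k := fun m hm ↦ by
    rw [mem_verticalEdges_iff] at hm
    exact mem_Icc_neg_natCast_iff.mpr ⟨hm.1.le, hm.2.1.le, hm.2.2⟩
  have card_add_le : #F + 1 + 4 * (2 * k + 1) ≤ (2 * k + 1) ^ 3 := by
    rw [← card_insert_of_notMem h0, ← card_verticalEdges hk, ← card_Icc_neg_natCast,
      ← card_sdiff_add_card_eq_card edges_subset]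
    gcongr
    exact insert_subset zero_mem hF
  -- `14 k³ + 1 + 4 (2 k + 1) - (2 k + 1)³ = 2 (k - 1) (3 k² - 3 k - 2)`, which is nonnegative
  obtain ⟨j, rfl⟩ := Nat.exists_eq_add_one_of_ne_zero hk
  have le_sq : j ≤ j ^ 2 := Nat.le_self_pow two_ne_zero j
  nlinarith

end CubeCount

/-- The function `g*` on `ℤ³` with parameter `a`; for `a = 1` its sublevel sets are the lattice
points of the cylinders `m₁² + m₂² ≤ s²`, `|m₃| ≤ s`. -/
noncomputable def gstar (a : ℝ) (m : ℤ × ℤ × ℤ) : ℝ :=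
  max √(a * ((m.1 : ℝ) ^ 2 + (m.2.1 : ℝ) ^ 2)) (|(m.2.2 : ℝ)| / a)

lemma gstar_zero (a : ℝ) : gstar a 0 = 0 := by simp [gstar]

lemma min_mul_gstar_one_le {a : ℝ} (ha : 0 ≤ a) (m : ℤ × ℤ × ℤ) :
    min √a (1 / a) * gstar 1 m ≤ gstar a m := by
  have min_nonneg : 0 ≤ min √a (1 / a) := le_min (Real.sqrt_nonneg a) (by positivity)
  rw [gstar, gstar, mul_max_of_nonneg _ _ min_nonneg, one_mul, div_one, Real.sqrt_mul ha,
    div_eq_mul_one_div |(m.2.2 : ℝ)|, mul_comm |(m.2.2 : ℝ)|]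
  gcongr
  exacts [min_le_left _ _, min_le_right _ _]

lemma gstar_one_le_iff {m : ℤ × ℤ × ℤ} {s : ℝ} (hs : 0 ≤ s) :
    gstar 1 m ≤ s ↔ (m.1 : ℝ) ^ 2 + (m.2.1 : ℝ) ^ 2 ≤ s ^ 2 ∧ |(m.2.2 : ℝ)| ≤ s := by
  rw [gstar, max_le_iff, one_mul, div_one, Real.sqrt_le_left hs]

lemma abs_le_natFloor {x : ℤ} {s : ℝ} (h : |(x : ℝ)| ≤ s) : |x| ≤ ⌊s⌋₊ := by
  rw [Int.abs_eq_natAbs, Nat.cast_le]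
  exact Nat.le_floor (by rwa [Nat.cast_natAbs, Int.cast_abs])

lemma mem_Icc_natFloor_of_gstar_one_le {m : ℤ × ℤ × ℤ} {s : ℝ} (hs : 0 ≤ s)
    (hm : gstar 1 m ≤ s) : m ∈ Icc (-⌊s⌋₊ : ℤ × ℤ × ℤ) ⌊s⌋₊ := by
  obtain ⟨radius_le, height_le⟩ := (gstar_one_le_iff hs).mp hm
  refine mem_Icc_neg_natCast_iff.mpr
    ⟨abs_le_natFloor (abs_le_of_sq_le_sq ?_ hs), abs_le_natFloor (abs_le_of_sq_le_sq ?_ hs),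
      abs_le_natFloor height_le⟩
  · linarith [sq_nonneg (m.2.1 : ℝ)]
  · linarith [sq_nonneg (m.1 : ℝ)]

lemma two_mul_sq_le_of_mem_verticalEdges {m : ℤ × ℤ × ℤ} {k : ℕ} {s : ℝ} (hs : 0 ≤ s)
    (hm : gstar 1 m ≤ s) (hmk : m ∈ verticalEdges k) : 2 * (k : ℝ) ^ 2 ≤ s ^ 2 := by
  obtain ⟨abs_fst, abs_snd, -⟩ := mem_verticalEdges_iff.mp hmk
  have cast_sq {x : ℤ} (hx : |x| = k) : (x : ℝ) ^ 2 = (k : ℝ) ^ 2 := by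
    rw [← sq_abs, ← Int.cast_abs, hx, Int.cast_natCast]
  have radius_le := ((gstar_one_le_iff hs).mp hm).1
  rw [cast_sq abs_fst, cast_sq abs_snd] at radius_le
  linarith

lemma card_le_of_gstar_one_le {F : Finset (ℤ × ℤ × ℤ)} {s : ℝ} (hs : 0 ≤ s) (h0 : 0 ∉ F)
    (hF : ∀ m ∈ F, gstar 1 m ≤ s) : #F ≤ 14 * s ^ 3 := by
  set k := ⌊s⌋₊
  have k_le : (k : ℝ) ≤ s := Nat.floor_le hs
  have subset_cube : F ⊆ Icc (-k : ℤ × ℤ × ℤ) k := fun m hm ↦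
    mem_Icc_natFloor_of_gstar_one_le hs (hF m hm)
  rcases le_or_gt (2 * (k : ℝ) ^ 2) (s ^ 2) with edges_inside | edges_outside
  · calc (#F : ℝ)
      _ ≤ 26 * (k : ℝ) ^ 3 := by exact_mod_cast card_le_of_subset_Icc h0 subset_cube
      _ ≤ 14 * (2 * (k : ℝ) ^ 2 * k) := by linarith [pow_nonneg (Nat.cast_nonneg (α := ℝ) k) 3]
      _ ≤ 14 * (s ^ 2 * s) := by gcongr
      _ = 14 * s ^ 3 := by ring
  · have k_ne_zero : k ≠ 0 := fun hk ↦ by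
      rw [hk, Nat.cast_zero, zero_pow two_ne_zero, mul_zero] at edges_outside
      exact edges_outside.not_ge (sq_nonneg s)
    have subset_sdiff : F ⊆ Icc (-k : ℤ × ℤ × ℤ) k \ verticalEdges k := fun m hm ↦
      mem_sdiff.mpr ⟨subset_cube hm, fun hmk ↦
        edges_outside.not_ge (two_mul_sq_le_of_mem_verticalEdges hs (hF m hm) hmk)⟩
    calc (#F : ℝ)
      _ ≤ 14 * (k : ℝ) ^ 3 := by
        exact_mod_cast card_le_of_subset_Icc_sdiff_verticalEdges k_ne_zero h0 subset_sdiff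
      _ ≤ 14 * s ^ 3 := by gcongr

lemma card_le_of_gstar_le {a t : ℝ} (ha : 0 < a) (ht : 0 ≤ t) {F : Finset (ℤ × ℤ × ℤ)}
    (h0 : 0 ∉ F) (hF : ∀ m ∈ F, gstar a m ≤ t) :
    #F ≤ 14 / min √a (1 / a) ^ 3 * t ^ 3 := by
  have min_pos : 0 < min √a (1 / a) := lt_min (Real.sqrt_pos.mpr ha) (by positivity)
  have gstar_one_le : ∀ m ∈ F, gstar 1 m ≤ t / min √a (1 / a) := fun m hm ↦ by
    rw [le_div_iff₀' min_pos]
    exact (min_mul_gstar_one_le ha.le m).trans (hF m hm)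
  calc (#F : ℝ)
    _ ≤ 14 * (t / min √a (1 / a)) ^ 3 := card_le_of_gstar_one_le (by positivity) h0 gstar_one_le
    _ = 14 / min √a (1 / a) ^ 3 * t ^ 3 := by ring

lemma sum_gstar_rpow_neg_le {a Z α : ℝ} (ha : 0 < a) (hZ : 0 < Z) (hα : 3 < α)
    {F : Finset (ℤ × ℤ × ℤ)} (hF : ∀ m ∈ F, Z < gstar a m) :
    ∑ m ∈ F, gstar a m ^ (-α) ≤ 14 * α / ((α - 3) * min √a (1 / a) ^ 3) * Z ^ (3 - α) := by
  have zero_notMem : 0 ∉ F := fun h ↦ (hZ.trans (hF 0 h)).ne' (gstar_zero a)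
  have card_le (t : ℝ) (ht : Z < t) :
      #{m ∈ F | gstar a m < t} ≤ 14 / min √a (1 / a) ^ 3 * t ^ (3 : ℝ) := by
    rw [Real.rpow_ofNat]
    exact card_le_of_gstar_le ha (hZ.trans ht).le (fun h ↦ zero_notMem (mem_filter.mp h).1)
      fun m hm ↦ (mem_filter.mp hm).2.le
  refine (sum_rpow_neg_le_of_card_le hZ (by linarith) hα hF card_le).trans_eq ?_
  rw [div_mul_eq_mul_div 14, div_div, mul_comm (α - 3)]

/-- For `a > 0`, `g*(m) := max(√(a(m₁²+m₂²)), |m₃|/a)` and `g₀ := min(√a, 1/a)`, one has,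
for all reals `Z > 0` and `α > 3`, that `∑_{g*(m) > Z} g*(m)^{−α}` converges and is at most
`(14α/((α−3)g₀³))·Z^{3−α}`. -/
theorem sum_gstar_rpow_le (a : ℝ) (ha : 0 < a) (Z α : ℝ) (hZ : 0 < Z) (hα : 3 < α)
    (gs : ℤ × ℤ × ℤ → ℝ)
    (hgs : ∀ m : ℤ × ℤ × ℤ,
      gs m = max (Real.sqrt (a * ((m.1 : ℝ) ^ 2 + (m.2.1 : ℝ) ^ 2))) (|(m.2.2 : ℝ)| / a))
    (g₀ : ℝ) (hg₀ : g₀ = min (Real.sqrt a) (1 / a)) :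
    Summable (fun m : {m : ℤ × ℤ × ℤ // Z < gs m} => (gs (m : ℤ × ℤ × ℤ)) ^ (-α)) ∧
      (∑' m : {m : ℤ × ℤ × ℤ // Z < gs m}, (gs (m : ℤ × ℤ × ℤ)) ^ (-α))
        ≤ 14 * α / ((α - 3) * g₀ ^ 3) * Z ^ (3 - α) := by
  obtain rfl : gs = gstar a := funext hgs
  subst hg₀
  have terms_nonneg (m : {m // Z < gstar a m}) : 0 ≤ gstar a m ^ (-α) :=
    Real.rpow_nonneg (hZ.trans m.2).le _
  have partial_sums_le (F : Finset {m // Z < gstar a m}) :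
      ∑ m ∈ F, gstar a m ^ (-α) ≤ 14 * α / ((α - 3) * min √a (1 / a) ^ 3) * Z ^ (3 - α) := by
    simpa only [sum_map, Function.Embedding.coe_subtype] using
      sum_gstar_rpow_neg_le ha hZ hα fun m hm ↦ property_of_mem_map_subtype F hm
  have summable := summable_of_sum_le terms_nonneg partial_sums_le
  exact ⟨summable, summable.tsum_le_of_sum_le partial_sums_le⟩
end

section
/- Let x, y be real numbers with 0 < y ≤ x/3 and let u = y or u = −y. Then |(16π/105)·((x+2u)^{7/2} − 2(x+u)^{7/2} + x^{7/2})/y² − (4π/3)·x^{3/2}| ≤ 8.4·x^{1/2}·y. -/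
open Real

/-!
The function `16π/105 · t^(7/2)` has second derivative `V t = 4π/3 · t^(3/2)`, so its second
difference with step `u` is the integral of `V (x + s + t)` over `s, t` between `0` and `u`.
If `V` is Lipschitz between `x` and `x + 2u` with constant `C`, replacing `V (x + s + t)` by `V x`
costs at most the integral of `C |s + t|`, which is `C |u|³`. Here `x + 2u ≤ 5x/3`, so one may take
`C = 2π √(5x/3)`, and `2π √(5/3) < 8.4`.

A comparison principle replaces the double integral: if `‖f''‖ ≤ B''`, then the second differences
of `f` are bounded in norm by those of `B`. The majorant `B` is cubic, because `C |z - x|` is affine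
in `z` on either side of `x`.
-/

open Set
open scoped fwdDiff Topology

theorem hasDerivWithinAt_fwdDiff {𝕜 E : Type*} [NontriviallyNormedField 𝕜]
    [NormedAddCommGroup E] [NormedSpace 𝕜 E] {f : 𝕜 → E} {h z : 𝕜} {e e' : E} {s t : Set 𝕜}
    (hadd : HasDerivWithinAt f e' s (z + h)) (hf : HasDerivWithinAt f e s z)
    (hts : t ⊆ s) (hmaps : MapsTo (· + h) t s) :
    HasDerivWithinAt (Δ_[h] f) (e' - e) t z := by
  have hshift : HasDerivWithinAt (f ∘ (· + h)) e' t z := by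
    simpa using hadd.scomp z ((hasDerivWithinAt_id z t).add_const h) hmaps
  exact hshift.sub (hf.mono hts)

section SecondDifference

variable {E : Type*} [NormedAddCommGroup E] [NormedSpace ℝ E] {f f' f'' : ℝ → E} {x h : ℝ}

theorem norm_fwdDiff_le_fwdDiff {B B' : ℝ → ℝ} (hh : 0 ≤ h)
    (hf : ∀ z ∈ Icc x (x + h), HasDerivWithinAt f (f' z) (Icc x (x + h)) z)
    (hB : ∀ z ∈ Icc x (x + h), HasDerivWithinAt B (B' z) (Icc x (x + h)) z)
    (bound : ∀ z ∈ Icc x (x + h), ‖f' z‖ ≤ B' z) :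
    ‖Δ_[h] f x‖ ≤ Δ_[h] B x := by
  have hIci : ∀ z ∈ Ico x (x + h), Icc x (x + h) ∈ 𝓝[≥] z := fun z hz ↦
    Icc_mem_nhdsGE_of_mem hz
  refine image_norm_le_of_norm_deriv_right_le_deriv_boundary'
    (f := fun z ↦ f z - f x) (B := fun z ↦ B z - B x) (f' := f') (B' := B')
    (fun z hz ↦ ((hf z hz).sub_const (f x)).continuousWithinAt)
    (fun z hz ↦ ((hf z (Ico_subset_Icc_self hz)).sub_const (f x)).mono_of_mem_nhdsWithin
      (hIci z hz))
    (by simp)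
    (fun z hz ↦ ((hB z hz).sub_const (B x)).continuousWithinAt)
    (fun z hz ↦ ((hB z (Ico_subset_Icc_self hz)).sub_const (B x)).mono_of_mem_nhdsWithin
      (hIci z hz))
    (fun z hz ↦ bound z (Ico_subset_Icc_self hz))
    (right_mem_Icc.2 (by linarith))

theorem norm_fwdDiff_fwdDiff_le_fwdDiff_fwdDiff {B B' B'' : ℝ → ℝ} (hh : 0 ≤ h)
    (hf : ∀ z ∈ Icc x (x + 2 * h), HasDerivWithinAt f (f' z) (Icc x (x + 2 * h)) z)
    (hf' : ∀ z ∈ Icc x (x + 2 * h), HasDerivWithinAt f' (f'' z) (Icc x (x + 2 * h)) z)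
    (hB : ∀ z ∈ Icc x (x + 2 * h), HasDerivWithinAt B (B' z) (Icc x (x + 2 * h)) z)
    (hB' : ∀ z ∈ Icc x (x + 2 * h), HasDerivWithinAt B' (B'' z) (Icc x (x + 2 * h)) z)
    (bound : ∀ z ∈ Icc x (x + 2 * h), ‖f'' z‖ ≤ B'' z) :
    ‖Δ_[h] (Δ_[h] f) x‖ ≤ Δ_[h] (Δ_[h] B) x := by
  have hsub : Icc x (x + h) ⊆ Icc x (x + 2 * h) := Icc_subset_Icc_right (by linarith)
  have hmaps : MapsTo (· + h) (Icc x (x + h)) (Icc x (x + 2 * h)) := fun z hz ↦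
    ⟨by linarith [hz.1], by linarith [hz.2]⟩
  refine norm_fwdDiff_le_fwdDiff hh
    (fun z hz ↦ hasDerivWithinAt_fwdDiff (hf _ (hmaps hz)) (hf z (hsub hz)) hsub hmaps)
    (fun z hz ↦ hasDerivWithinAt_fwdDiff (hB _ (hmaps hz)) (hB z (hsub hz)) hsub hmaps)
    fun z hz ↦ ?_
  have hstep : Icc z (z + h) ⊆ Icc x (x + 2 * h) :=
    Icc_subset_Icc hz.1 (by linarith [hz.2])
  exact norm_fwdDiff_le_fwdDiff hh (fun w hw ↦ (hf' w (hstep hw)).mono hstep)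
    (fun w hw ↦ (hB' w (hstep hw)).mono hstep) fun w hw ↦ bound w (hstep hw)

theorem norm_fwdDiff_fwdDiff_sub_smul_le_of_le_affine {c : E} {α β : ℝ} (hh : 0 ≤ h)
    (hf : ∀ z ∈ Icc x (x + 2 * h), HasDerivWithinAt f (f' z) (Icc x (x + 2 * h)) z)
    (hf' : ∀ z ∈ Icc x (x + 2 * h), HasDerivWithinAt f' (f'' z) (Icc x (x + 2 * h)) z)
    (bound : ∀ z ∈ Icc x (x + 2 * h), ‖f'' z - c‖ ≤ α + β * (z - x)) :
    ‖Δ_[h] (Δ_[h] f) x - h ^ 2 • c‖ ≤ h ^ 2 * (α + β * h) := by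
  have hlin (z : ℝ) : HasDerivAt (fun w : ℝ ↦ w - x) 1 z := (hasDerivAt_id z).sub_const x
  have hsq (z : ℝ) : HasDerivAt (fun w : ℝ ↦ (w - x) ^ 2 / 2) (z - x) z := by
    simpa using ((hlin z).pow 2).div_const 2
  have hcube (z : ℝ) : HasDerivAt (fun w : ℝ ↦ (w - x) ^ 3 / 6) ((z - x) ^ 2 / 2) z := by
    refine (((hlin z).pow 3).div_const 6).congr_deriv ?_
    ring
  have hmajorant := norm_fwdDiff_fwdDiff_le_fwdDiff_fwdDiff hh
    (fun z hz ↦ (hf z hz).sub ((hsq z).smul_const c).hasDerivWithinAt)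
    (fun z hz ↦ (hf' z hz).sub ((hlin z).smul_const c).hasDerivWithinAt)
    (fun z _ ↦ (((hsq z).const_mul α).add ((hcube z).const_mul β)).hasDerivWithinAt)
    (fun z _ ↦ (((hlin z).const_mul α).add ((hsq z).const_mul β)).hasDerivWithinAt)
    (fun z hz ↦ by simpa using bound z hz)
  convert hmajorant using 1
  · congr 1
    simp only [fwdDiff, Pi.sub_apply]
    module
  · simp only [fwdDiff, Pi.add_apply]
    ring

theorem norm_fwdDiff_fwdDiff_sub_smul_le {u C : ℝ}
    (hf : ∀ z ∈ uIcc x (x + 2 * u), HasDerivWithinAt f (f' z) (uIcc x (x + 2 * u)) z)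
    (hf' : ∀ z ∈ uIcc x (x + 2 * u), HasDerivWithinAt f' (f'' z) (uIcc x (x + 2 * u)) z)
    (bound : ∀ z ∈ uIcc x (x + 2 * u), ‖f'' z - f'' x‖ ≤ C * |z - x|) :
    ‖Δ_[u] (Δ_[u] f) x - u ^ 2 • f'' x‖ ≤ C * |u| ^ 3 := by
  rcases le_total 0 u with hu | hu
  · rw [uIcc_of_le (by linarith)] at hf hf' bound
    have hright := norm_fwdDiff_fwdDiff_sub_smul_le_of_le_affine (c := f'' x) (α := 0) (β := C)
      hu hf hf' fun z hz ↦ by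
        simpa [abs_of_nonneg (sub_nonneg.2 hz.1)] using bound z hz
    rw [abs_of_nonneg hu]
    linarith
  · have hx : x = x + 2 * u + 2 * -u := by ring
    rw [uIcc_of_ge (by linarith)] at hf hf' bound
    have hleft := norm_fwdDiff_fwdDiff_sub_smul_le_of_le_affine (f := f) (f' := f') (f'' := f'')
      (x := x + 2 * u) (h := -u) (c := f'' x) (α := -(2 * C * u)) (β := -C) (by linarith)
      (by rwa [← hx]) (by rwa [← hx]) fun z hz ↦ by
        rw [← hx] at hz
        have := bound z hz
        rw [abs_of_nonpos (sub_nonpos.2 hz.2)] at this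
        linarith
    have hsymm : Δ_[-u] (Δ_[-u] f) (x + 2 * u) = Δ_[u] (Δ_[u] f) x := by
      simp only [fwdDiff]
      ring_nf
      abel
    rw [hsymm, neg_sq] at hleft
    rw [abs_of_nonpos hu]
    linarith

end SecondDifference

theorem abs_rpow_sub_rpow_le {p a b M : ℝ} (hp : 1 ≤ p) (ha : a ∈ Icc 0 M) (hb : b ∈ Icc 0 M) :
    |b ^ p - a ^ p| ≤ p * M ^ (p - 1) * |b - a| := by
  refine (convex_Icc 0 M).norm_image_sub_le_of_norm_hasDerivWithin_le
    (fun z _ ↦ (hasDerivAt_rpow_const (Or.inr hp)).hasDerivWithinAt) (fun z hz ↦ ?_) ha hb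
  have hz0 : 0 ≤ z := hz.1
  rw [norm_of_nonneg (by positivity)]
  gcongr
  exact hz.2

theorem abs_fwdDiff_fwdDiff_rpow_sub_le {p x u M : ℝ} (hp : 1 ≤ p) (hx : x ∈ Icc 0 M)
    (hxu : x + 2 * u ∈ Icc 0 M) :
    |Δ_[u] (Δ_[u] fun t ↦ t ^ (p + 2)) x / ((p + 2) * (p + 1)) - u ^ 2 * x ^ p|
      ≤ p * M ^ (p - 1) * |u| ^ 3 := by
  have hderiv (z : ℝ) : HasDerivAt (fun t ↦ t ^ (p + 2) / ((p + 2) * (p + 1)))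
      (z ^ (p + 1) / (p + 1)) z := by
    refine ((hasDerivAt_rpow_const (Or.inr (by linarith))).div_const _).congr_deriv ?_
    rw [show p + 2 - 1 = p + 1 by ring]
    field_simp
  have hderiv2 (z : ℝ) : HasDerivAt (fun t ↦ t ^ (p + 1) / (p + 1)) (z ^ p) z := by
    refine ((hasDerivAt_rpow_const (Or.inr (by linarith))).div_const _).congr_deriv ?_
    rw [add_sub_cancel_right]
    field_simp
  have hdiff := norm_fwdDiff_fwdDiff_sub_smul_le (x := x) (u := u)
    (fun z _ ↦ (hderiv z).hasDerivWithinAt) (fun z _ ↦ (hderiv2 z).hasDerivWithinAt)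
    fun z hz ↦ abs_rpow_sub_rpow_le hp hx (uIcc_subset_Icc hx hxu hz)
  convert hdiff using 1
  rw [norm_eq_abs, smul_eq_mul]
  simp only [fwdDiff]
  ring_nf

theorem abs_fwdDiff_fwdDiff_rpow_div_sq_sub_le {p x u M : ℝ} (hp : 1 ≤ p) (hu : u ≠ 0)
    (hx : x ∈ Icc 0 M) (hxu : x + 2 * u ∈ Icc 0 M) :
    |Δ_[u] (Δ_[u] fun t ↦ t ^ (p + 2)) x / ((p + 2) * (p + 1)) / u ^ 2 - x ^ p|
      ≤ p * M ^ (p - 1) * |u| := by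
  have hu_sq : 0 < u ^ 2 := by positivity
  rw [div_sub' hu_sq.ne', abs_div, abs_of_pos hu_sq, div_le_iff₀ hu_sq]
  calc _ ≤ p * M ^ (p - 1) * |u| ^ 3 := abs_fwdDiff_fwdDiff_rpow_sub_le hp hx hxu
    _ = p * M ^ (p - 1) * |u| * u ^ 2 := by rw [← sq_abs u]; ring

theorem two_pi_mul_five_thirds_mul_rpow_half_le {x : ℝ} (hx : 0 ≤ x) :
    2 * π * (5 / 3 * x) ^ ((1 : ℝ) / 2) ≤ 8.4 * x ^ ((1 : ℝ) / 2) := by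
  have hsqrt : √(5 / 3) ≤ 1.3 := by
    rw [sqrt_le_left (by norm_num)]
    norm_num
  have hconst : 2 * π * √(5 / 3) ≤ 8.4 :=
    calc 2 * π * √(5 / 3) ≤ 2 * 3.15 * 1.3 := by gcongr; exact pi_lt_d2.le
      _ ≤ 8.4 := by norm_num
  rw [mul_rpow (by norm_num) hx, ← sqrt_eq_rpow, ← sqrt_eq_rpow, ← mul_assoc]
  gcongr

/-- For reals `0 < y ≤ x/3` and `u = ±y`,
`|(16π/105)((x+2u)^{7/2} − 2(x+u)^{7/2} + x^{7/2})/y² − (4π/3)x^{3/2}| ≤ 8.4 x^{1/2} y`. -/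
theorem volume_second_difference_estimate (x y u : ℝ) (hy : 0 < y) (hyx : y ≤ x / 3)
    (hu : u = y ∨ u = -y) :
    |(16 * π / 105) * ((x + 2 * u) ^ ((7 : ℝ) / 2) - 2 * (x + u) ^ ((7 : ℝ) / 2)
        + x ^ ((7 : ℝ) / 2)) / y ^ 2 - (4 * π / 3) * x ^ ((3 : ℝ) / 2)|
      ≤ 8.4 * x ^ ((1 : ℝ) / 2) * y := by
  have hu_abs : |u| = y := by rw [← abs_of_pos hy]; exact abs_eq_abs.2 hu
  have hx : 0 ≤ x := by linarith
  obtain ⟨hu_lower, hu_upper⟩ := abs_le.1 hu_abs.le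
  have hdiff := abs_fwdDiff_fwdDiff_rpow_div_sq_sub_le (p := 3 / 2) (x := x) (u := u)
    (M := 5 / 3 * x) (by norm_num) (abs_pos.1 (hu_abs ▸ hy)) ⟨by linarith, by linarith⟩
    ⟨by linarith, by linarith⟩
  rw [← sq_abs u, hu_abs] at hdiff
  set D := Δ_[u] (Δ_[u] fun t : ℝ ↦ t ^ ((3 : ℝ) / 2 + 2)) x with hD
  have hexpand : (x + 2 * u) ^ ((7 : ℝ) / 2) - 2 * (x + u) ^ ((7 : ℝ) / 2) + x ^ ((7 : ℝ) / 2)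
      = D := by
    simp only [hD, fwdDiff]
    ring_nf
  calc _ = |4 * π / 3 * (D / ((3 / 2 + 2) * (3 / 2 + 1)) / y ^ 2 - x ^ ((3 : ℝ) / 2))| := by
        rw [hexpand]; ring_nf
    _ ≤ 4 * π / 3 * (3 / 2 * (5 / 3 * x) ^ ((3 : ℝ) / 2 - 1) * y) := by
        rw [abs_mul, abs_of_pos (by positivity)]; gcongr
    _ = 2 * π * (5 / 3 * x) ^ ((1 : ℝ) / 2) * y := by ring_nf
    _ ≤ 8.4 * x ^ ((1 : ℝ) / 2) * y :=
        mul_le_mul_of_nonneg_right (two_pi_mul_five_thirds_mul_rpow_half_le hx) hy.le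
end

section
/- Let a > 0, t > 0, and let m = (m₁,m₂,m₃) ∈ ℤ³ be nonzero. Set g(m) := √(a(m₁² + m₂²) + m₃²/a²). Then the Fourier integral I(m,t) := ∫_{{u ∈ ℝ³ : (u₁²+u₂²)/a + a²u₃² ≤ t}} e^{2πi(m₁u₁ + m₂u₂ + m₃u₃)} du equals −(√t/(π·g(m)²))·cos(2π·g(m)·√t) + sin(2π·g(m)·√t)/(2π²·g(m)³). -/
open MeasureTheory Real

/-!
A linear dilation carries the ellipsoid to a ball of radius `r = √t` and the frequency `m` to a
vector of norm `g`. The ball is invariant under isometries, so that vector may be rotated onto the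
first coordinate axis; the slice of the ball at height `s` is a disc of area `π (r² - s²)`, and what
remains is `π ∫ (r² - s²) e^{2πigs} ds` over `[-r, r]`, which is elementary.
-/

section IsometryInvariance

variable {E E' : Type*} [NormedAddCommGroup E] [InnerProductSpace ℝ E] [FiniteDimensional ℝ E]
  [NormedAddCommGroup E'] [InnerProductSpace ℝ E'] [FiniteDimensional ℝ E']

theorem exists_linearIsometryEquiv_apply_eq
    (hdim : Module.finrank ℝ E = Module.finrank ℝ E') {v : E} {w : E'} (hvw : ‖v‖ = ‖w‖) :
    ∃ φ : E ≃ₗᵢ[ℝ] E', φ v = w := by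
  let ψ : E ≃ₗᵢ[ℝ] E' :=
    (stdOrthonormalBasis ℝ E).equiv (stdOrthonormalBasis ℝ E') (finCongr hdim)
  have hψ : ‖ψ v‖ = ‖w‖ := by rw [ψ.norm_map, hvw]
  exact ⟨ψ.trans (ℝ ∙ (ψ v - w))ᗮ.reflection, Submodule.reflection_sub hψ⟩

variable [MeasurableSpace E] [BorelSpace E] [MeasurableSpace E'] [BorelSpace E']
  {G : Type*} [NormedAddCommGroup G] [NormedSpace ℝ G]

theorem setIntegral_closedBall_comp_inner_congr
    (hdim : Module.finrank ℝ E = Module.finrank ℝ E') {v : E} {w : E'} (hvw : ‖v‖ = ‖w‖)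
    (f : ℝ → G) (r : ℝ) :
    ∫ x in Metric.closedBall (0 : E) r, f (inner ℝ v x) =
      ∫ y in Metric.closedBall (0 : E') r, f (inner ℝ w y) := by
  obtain ⟨φ, rfl⟩ := exists_linearIsometryEquiv_apply_eq hdim hvw
  rw [← φ.measurePreserving.setIntegral_preimage_emb φ.toMeasurableEquiv.measurableEmbedding]
  simp only [φ.inner_map_map, φ.preimage_closedBall, map_zero]

end IsometryInvariance

section Slicing

theorem finrank_withLp_prod {R M N : Type*} [Ring R] [StrongRankCondition R]
    [AddCommGroup M] [Module R M] [Module.Free R M] [Module.Finite R M]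
    [AddCommGroup N] [Module R N] [Module.Free R N] [Module.Finite R N] (p : ENNReal) :
    Module.finrank R (WithLp p (M × N)) = Module.finrank R M + Module.finrank R N := by
  rw [(WithLp.linearEquiv p R (M × N)).finrank_eq, Module.finrank_prod]

variable {G : Type*} [NormedAddCommGroup G] [NormedSpace ℝ G] [CompleteSpace G]

theorem setIntegral_prod_comp_fst {α β : Type*} [MeasurableSpace α] [MeasurableSpace β]
    {μ : Measure α} {ν : Measure β} [SFinite μ] [SFinite ν] {s : Set (α × β)}
    (hs : MeasurableSet s) {f : α → G} (hf : IntegrableOn (fun p ↦ f p.1) s (μ.prod ν)) :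
    ∫ p in s, f p.1 ∂μ.prod ν = ∫ x, ν.real (Prod.mk x ⁻¹' s) • f x ∂μ := by
  rw [← integral_indicator hs, integral_prod _ (hf.integrable_indicator hs)]
  congr with x
  exact integral_indicator_const (f x) (measurable_prodMk_left hs)

theorem sq_add_sq_le_sq_iff_mem_Icc {r : ℝ} (hr : 0 ≤ r) (s : ℝ) {b : ℝ} (hb : 0 ≤ b) :
    s ^ 2 + b ^ 2 ≤ r ^ 2 ↔ s ∈ Set.Icc (-r) r ∧ b ≤ √(r ^ 2 - s ^ 2) := by
  rw [Set.mem_Icc, ← abs_le, ← sq_le_sq₀ (abs_nonneg s) hr, sq_abs]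
  constructor
  · intro h
    exact ⟨by nlinarith [sq_nonneg b], Real.le_sqrt_of_sq_le (by linarith)⟩
  · rintro ⟨hs, hbs⟩
    rw [Real.le_sqrt hb (sub_nonneg.2 hs)] at hbs
    linarith

theorem setIntegral_sq_add_norm_sq_le_comp_fst {F : Type*} [NormedAddCommGroup F] [ProperSpace F]
    [MeasurableSpace F] [BorelSpace F] (ν : Measure F) [IsFiniteMeasureOnCompacts ν]
    {r : ℝ} (hr : 0 ≤ r) {f : ℝ → G} (hf : IntegrableOn f (Set.Icc (-r) r)) :
    ∫ p in {p : ℝ × F | p.1 ^ 2 + ‖p.2‖ ^ 2 ≤ r ^ 2}, f p.1 ∂volume.prod ν =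
      ∫ s in -r..r, ν.real (Metric.closedBall (0 : F) √(r ^ 2 - s ^ 2)) • f s := by
  set B : Set (ℝ × F) := {p | p.1 ^ 2 + ‖p.2‖ ^ 2 ≤ r ^ 2}
  have mem_B (s : ℝ) (y : F) :
      (s, y) ∈ B ↔ s ∈ Set.Icc (-r) r ∧ y ∈ Metric.closedBall 0 √(r ^ 2 - s ^ 2) := by
    rw [mem_closedBall_zero_iff]
    exact sq_add_sq_le_sq_iff_mem_Icc hr s (norm_nonneg y)
  have hB : MeasurableSet B := (isClosed_le (by fun_prop) (by fun_prop)).measurableSet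
  have B_subset : B ⊆ Set.Icc (-r) r ×ˢ Metric.closedBall 0 r := by
    rintro ⟨s, y⟩ h
    obtain ⟨hs, hy⟩ := (mem_B s y).1 h
    refine ⟨hs, Metric.closedBall_subset_closedBall ?_ hy⟩
    exact (Real.sqrt_le_left hr).2 (sub_le_self _ (sq_nonneg s))
  have hfB : IntegrableOn (fun p : ℝ × F ↦ f p.1) B (volume.prod ν) := by
    have : IsFiniteMeasure (ν.restrict (Metric.closedBall (0 : F) r)) :=
      isFiniteMeasure_restrict.2 measure_closedBall_lt_top.ne
    refine IntegrableOn.mono_set ?_ B_subset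
    rw [IntegrableOn, ← Measure.prod_restrict]
    exact hf.comp_fst _
  rw [setIntegral_prod_comp_fst hB hfB, intervalIntegral.integral_of_le (by linarith),
    ← integral_Icc_eq_integral_Ioc,
    ← setIntegral_eq_integral_of_forall_compl_eq_zero (s := Set.Icc (-r) r)]
  · refine setIntegral_congr_fun measurableSet_Icc fun s hs ↦ ?_
    have slice : Prod.mk s ⁻¹' B = Metric.closedBall 0 √(r ^ 2 - s ^ 2) :=
      Set.ext fun y ↦ (mem_B s y).trans (and_iff_right hs)
    simp only [slice]
  · intro s hs
    have slice : Prod.mk s ⁻¹' B = ∅ :=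
      Set.eq_empty_of_forall_notMem fun y hy ↦ hs ((mem_B s y).1 hy).1
    simp [slice]

theorem setIntegral_closedBall_comp_inner {E : Type*} [NormedAddCommGroup E]
    [InnerProductSpace ℝ E] [FiniteDimensional ℝ E] [MeasurableSpace E] [BorelSpace E]
    (F : Type*) [NormedAddCommGroup F] [InnerProductSpace ℝ F] [FiniteDimensional ℝ F]
    [MeasurableSpace F] [BorelSpace F]
    (hdim : Module.finrank ℝ E = Module.finrank ℝ F + 1) (v : E) {r : ℝ} (hr : 0 ≤ r)
    {f : ℝ → G} (hf : IntegrableOn (fun s ↦ f (‖v‖ * s)) (Set.Icc (-r) r)) :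
    ∫ x in Metric.closedBall (0 : E) r, f (inner ℝ v x) =
      ∫ s in -r..r, volume.real (Metric.closedBall (0 : F) √(r ^ 2 - s ^ 2)) • f (‖v‖ * s) := by
  let w : WithLp 2 (ℝ × F) := WithLp.toLp 2 (‖v‖, 0)
  have hvw : ‖v‖ = ‖w‖ := by simp [w]
  have hdim' : Module.finrank ℝ E = Module.finrank ℝ (WithLp 2 (ℝ × F)) := by
    rw [hdim, finrank_withLp_prod, Module.finrank_self, add_comm]
  have ball_eq : WithLp.toLp 2 ⁻¹' Metric.closedBall (0 : WithLp 2 (ℝ × F)) r =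
      {p | p.1 ^ 2 + ‖p.2‖ ^ 2 ≤ r ^ 2} := by
    ext p
    simp [← sq_le_sq₀ (norm_nonneg _) hr, WithLp.prod_norm_sq_eq_of_L2]
  rw [setIntegral_closedBall_comp_inner_congr hdim' hvw,
    ← (WithLp.volume_preserving_toLp ℝ F).setIntegral_preimage_emb
      (MeasurableEquiv.toLp 2 (ℝ × F)).measurableEmbedding,
    ball_eq, Measure.volume_eq_prod, ← setIntegral_sq_add_norm_sq_le_comp_fst volume hr hf]
  simp [w, WithLp.prod_inner_apply, mul_comm]

end Slicing

section Ball

/-- The Fourier transform of the indicator function of the ball of radius `r` in a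
three-dimensional Euclidean space, at a frequency of norm `g`. It is only meaningful for `g ≠ 0`:
at `g = 0` the divisions return `0` instead of the volume of the ball. -/
noncomputable def ballFourier (r g : ℝ) : ℝ :=
  -(r * cos (2 * π * g * r)) / (π * g ^ 2) + sin (2 * π * g * r) / (2 * π ^ 2 * g ^ 3)

theorem integral_sq_sub_sq_mul_cexp (r : ℝ) {c : ℂ} (hc : c ≠ 0) :
    ∫ s in -r..r, ((r ^ 2 - s ^ 2 : ℝ) : ℂ) * Complex.exp (c * s) =
      4 * (r * Complex.cosh (c * r) / c ^ 2 - Complex.sinh (c * r) / c ^ 3) := by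
  have primitive (s : ℝ) : HasDerivAt
      (fun s : ℝ ↦ Complex.exp (c * s) * ((r ^ 2 - s ^ 2) / c + 2 * s / c ^ 2 - 2 / c ^ 3))
      (((r ^ 2 - s ^ 2 : ℝ) : ℂ) * Complex.exp (c * s)) s := by
    have hs : HasDerivAt (fun s : ℝ ↦ (s : ℂ)) 1 s := Complex.ofRealCLM.hasDerivAt
    have hpoly := ((((hs.pow 2).const_sub ((r : ℂ) ^ 2)).div_const c).add
      ((hs.const_mul 2).div_const (c ^ 2))).sub_const (2 / c ^ 3)
    refine ((hs.const_mul c).cexp.mul hpoly).congr_deriv ?_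
    simp only [mul_one, Pi.pow_apply, Pi.add_apply, Nat.cast_ofNat, Nat.add_one_sub_one, pow_one,
      Complex.ofReal_sub, Complex.ofReal_pow]
    field_simp
    ring
  rw [intervalIntegral.integral_eq_sub_of_hasDerivAt (fun s _ ↦ primitive s)
    (Continuous.intervalIntegrable (by fun_prop) _ _), Complex.cosh, Complex.sinh]
  push_cast
  ring_nf

theorem pi_mul_integral_sq_sub_sq_mul_cexp (r : ℝ) {g : ℝ} (hg : g ≠ 0) :
    π * ∫ s in -r..r, ((r ^ 2 - s ^ 2 : ℝ) : ℂ) * Complex.exp (2 * π * g * Complex.I * s) =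
      ballFourier r g := by
  have hg' : (g : ℂ) ≠ 0 := mod_cast hg
  have hπ : (π : ℂ) ≠ 0 := mod_cast pi_ne_zero
  have hphase : 2 * π * g * Complex.I * r = 2 * π * g * r * Complex.I := by ring
  rw [integral_sq_sub_sq_mul_cexp r (by simp [hg, pi_ne_zero]), hphase, Complex.cosh_mul_I,
    Complex.sinh_mul_I, ballFourier]
  push_cast
  simp only [mul_pow, Complex.I_sq, Complex.I_pow_three]
  field_simp
  ring

theorem setIntegral_closedBall_cexp_inner {E : Type*} [NormedAddCommGroup E]
    [InnerProductSpace ℝ E] [FiniteDimensional ℝ E] [MeasurableSpace E] [BorelSpace E]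
    (hdim : Module.finrank ℝ E = 3) {v : E} (hv : v ≠ 0) {r : ℝ} (hr : 0 ≤ r) :
    ∫ x in Metric.closedBall (0 : E) r, Complex.exp (2 * π * Complex.I * (inner ℝ v x : ℝ)) =
      ballFourier r ‖v‖ := by
  rw [setIntegral_closedBall_comp_inner (EuclideanSpace ℝ (Fin 2))
      (f := fun s ↦ Complex.exp (2 * π * Complex.I * s)) (by simp [hdim]) v hr
      (Continuous.integrableOn_Icc (by fun_prop)),
    ← pi_mul_integral_sq_sub_sq_mul_cexp r (norm_ne_zero_iff.2 hv),
    ← intervalIntegral.integral_const_mul]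
  refine intervalIntegral.integral_congr fun s hs ↦ ?_
  have hrs : 0 ≤ r ^ 2 - s ^ 2 := by
    rw [Set.uIcc_of_le (by linarith), Set.mem_Icc] at hs
    nlinarith
  have disc_area : volume.real (Metric.closedBall (0 : EuclideanSpace ℝ (Fin 2)) √(r ^ 2 - s ^ 2)) =
      (r ^ 2 - s ^ 2) * π := by
    simp [Measure.real, hrs, pi_nonneg]
  simp only [disc_area, Complex.real_smul]
  push_cast
  ring_nf

theorem setIntegral_prod_ball_cexp {ξ : ℝ × ℝ × ℝ} (hξ : ξ ≠ 0) {r : ℝ} (hr : 0 ≤ r) :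
    ∫ u in {u : ℝ × ℝ × ℝ | u.1 ^ 2 + u.2.1 ^ 2 + u.2.2 ^ 2 ≤ r ^ 2},
        Complex.exp (2 * π * Complex.I * ((ξ.1 * u.1 + ξ.2.1 * u.2.1 + ξ.2.2 * u.2.2 : ℝ) : ℂ)) =
      ballFourier r √(ξ.1 ^ 2 + ξ.2.1 ^ 2 + ξ.2.2 ^ 2) := by
  let toL2 (u : ℝ × ℝ × ℝ) : WithLp 2 (ℝ × WithLp 2 (ℝ × ℝ)) :=
    WithLp.toLp 2 (u.1, WithLp.toLp 2 u.2)
  have toL2_preserving : MeasurePreserving toL2 :=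
    (WithLp.volume_preserving_toLp ℝ _).comp
      ((MeasurePreserving.id _).prod (WithLp.volume_preserving_toLp ℝ ℝ))
  have toL2_embedding : MeasurableEmbedding toL2 :=
    Continuous.measurableEmbedding (by fun_prop) fun u u' h ↦ by
      simpa [toL2, Prod.ext_iff] using h
  have inner_toL2 (u u' : ℝ × ℝ × ℝ) :
      inner ℝ (toL2 u) (toL2 u') = u.1 * u'.1 + u.2.1 * u'.2.1 + u.2.2 * u'.2.2 := by
    simp only [toL2, WithLp.prod_inner_apply, RCLike.inner_apply, ringHom_apply]
    ring
  have norm_toL2 (u : ℝ × ℝ × ℝ) : ‖toL2 u‖ = √(u.1 ^ 2 + u.2.1 ^ 2 + u.2.2 ^ 2) := by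
    rw [norm_eq_sqrt_real_inner, inner_toL2]
    ring_nf
  have ball_eq : toL2 ⁻¹' Metric.closedBall 0 r =
      {u | u.1 ^ 2 + u.2.1 ^ 2 + u.2.2 ^ 2 ≤ r ^ 2} := by
    ext u
    simp [norm_toL2, Real.sqrt_le_left hr]
  have hξ' : toL2 ξ ≠ 0 := fun h ↦ hξ (toL2_embedding.injective h)
  rw [← norm_toL2, ← setIntegral_closedBall_cexp_inner (by simp [finrank_withLp_prod]) hξ' hr,
    ← toL2_preserving.setIntegral_preimage_emb toL2_embedding, ball_eq]
  simp only [inner_toL2]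

end Ball

section Ellipsoid

theorem setIntegral_eq_abs_det_smul_setIntegral_preimage {E G : Type*} [NormedAddCommGroup E]
    [NormedSpace ℝ E] [FiniteDimensional ℝ E] [MeasurableSpace E] [BorelSpace E]
    [NormedAddCommGroup G] [NormedSpace ℝ G] (μ : Measure E) [μ.IsAddHaarMeasure]
    {L : E →ₗ[ℝ] E} (hL : LinearMap.det L ≠ 0) (f : E → G) (s : Set E) :
    ∫ x in s, f x ∂μ = |LinearMap.det L| • ∫ y in L ⁻¹' s, f (L y) ∂μ := by
  have L_embedding : MeasurableEmbedding L :=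
    L.continuous_of_finiteDimensional.measurableEmbedding
      (LinearMap.equivOfDetNeZero L hL).injective
  rw [← L_embedding.setIntegral_map, Measure.map_linearMap_addHaar_eq_smul_addHaar μ hL,
    Measure.restrict_smul, integral_smul_measure, ENNReal.toReal_ofReal (abs_nonneg _), abs_inv,
    smul_inv_smul₀ (abs_ne_zero.2 hL)]

/-- The linear dilation of `ℝ³` by factors `α`, `β`, `γ` along the coordinate axes; it maps the
unit ball to the ellipsoid with these semi-axes. -/
noncomputable def axisDilation (α β γ : ℝ) : ℝ × ℝ × ℝ →ₗ[ℝ] ℝ × ℝ × ℝ :=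
  (α • LinearMap.id).prodMap ((β • LinearMap.id).prodMap (γ • LinearMap.id))

theorem axisDilation_apply (α β γ : ℝ) (u : ℝ × ℝ × ℝ) :
    axisDilation α β γ u = (α * u.1, β * u.2.1, γ * u.2.2) := rfl

theorem det_axisDilation (α β γ : ℝ) : LinearMap.det (axisDilation α β γ) = α * β * γ := by
  simp [axisDilation, LinearMap.det_prodMap, mul_assoc]

theorem setIntegral_ellipsoid_cexp {α β γ : ℝ} (hα : α ≠ 0) (hβ : β ≠ 0) (hγ : γ ≠ 0)
    {ξ : ℝ × ℝ × ℝ} (hξ : ξ ≠ 0) {r : ℝ} (hr : 0 ≤ r) :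
    ∫ u in {u : ℝ × ℝ × ℝ | (u.1 / α) ^ 2 + (u.2.1 / β) ^ 2 + (u.2.2 / γ) ^ 2 ≤ r ^ 2},
        Complex.exp (2 * π * Complex.I * ((ξ.1 * u.1 + ξ.2.1 * u.2.1 + ξ.2.2 * u.2.2 : ℝ) : ℂ)) =
      |α * β * γ| • (ballFourier r √((α * ξ.1) ^ 2 + (β * ξ.2.1) ^ 2 + (γ * ξ.2.2) ^ 2) : ℂ) := by
  have hdet : LinearMap.det (axisDilation α β γ) ≠ 0 := by simp [det_axisDilation, hα, hβ, hγ]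
  have hξ' : axisDilation α β γ ξ ≠ 0 := by
    simpa [axisDilation_apply, Prod.ext_iff, hα, hβ, hγ] using hξ
  have : (volume : Measure (ℝ × ℝ)).IsAddHaarMeasure :=
    inferInstanceAs (volume.prod volume).IsAddHaarMeasure
  have : (volume : Measure (ℝ × ℝ × ℝ)).IsAddHaarMeasure :=
    inferInstanceAs (volume.prod volume).IsAddHaarMeasure
  rw [setIntegral_eq_abs_det_smul_setIntegral_preimage volume hdet, det_axisDilation]
  refine congrArg _ (Eq.trans ?_ (setIntegral_prod_ball_cexp hξ' hr))
  simp only [axisDilation_apply, Set.preimage_ofPred_eq, mul_div_cancel_left₀ _ hα,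
    mul_div_cancel_left₀ _ hβ, mul_div_cancel_left₀ _ hγ, mul_left_comm, mul_assoc]

end Ellipsoid

theorem fourier_integral_ellipsoid_general {a t : ℝ} (ha : 0 < a) (ht : 0 ≤ t)
    {ξ : ℝ × ℝ × ℝ} (hξ : ξ ≠ 0) {g : ℝ}
    (hg : g = √(a * (ξ.1 ^ 2 + ξ.2.1 ^ 2) + ξ.2.2 ^ 2 / a ^ 2)) :
    ∫ u in {u : ℝ × ℝ × ℝ | (u.1 ^ 2 + u.2.1 ^ 2) / a + a ^ 2 * u.2.2 ^ 2 ≤ t},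
        Complex.exp (2 * π * Complex.I * ((ξ.1 * u.1 + ξ.2.1 * u.2.1 + ξ.2.2 * u.2.2 : ℝ) : ℂ)) =
      ballFourier √t g := by
  have unimodular : |√a * √a * a⁻¹| = 1 := by simp [ha.le, ha.ne']
  have ellipsoid_eq : {u : ℝ × ℝ × ℝ | (u.1 ^ 2 + u.2.1 ^ 2) / a + a ^ 2 * u.2.2 ^ 2 ≤ t} =
      {u | (u.1 / √a) ^ 2 + (u.2.1 / √a) ^ 2 + (u.2.2 / a⁻¹) ^ 2 ≤ √t ^ 2} := by
    ext u
    simp only [Set.mem_ofPred_eq, div_pow, sq_sqrt ha.le, sq_sqrt ht, add_div, div_inv_eq_mul,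
      mul_pow, mul_comm]
  have frequency_eq :
      (√a * ξ.1) ^ 2 + (√a * ξ.2.1) ^ 2 + (a⁻¹ * ξ.2.2) ^ 2 =
        a * (ξ.1 ^ 2 + ξ.2.1 ^ 2) + ξ.2.2 ^ 2 / a ^ 2 := by
    simp only [mul_pow, sq_sqrt ha.le]
    ring
  have hsa : √a ≠ 0 := (sqrt_pos.2 ha).ne'
  rw [ellipsoid_eq, setIntegral_ellipsoid_cexp hsa hsa (inv_ne_zero ha.ne') hξ (sqrt_nonneg t),
    unimodular, frequency_eq, ← hg, one_smul]

/-- For `a, t > 0` and nonzero `m ∈ ℤ³`, with `g(m) = √(a(m₁²+m₂²) + m₃²/a²)`, the Fourier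
integral of the ellipsoid `(u₁²+u₂²)/a + a²u₃² ≤ t` equals
`−(√t/(π g²))·cos(2π g √t) + sin(2π g √t)/(2π² g³)`. -/
theorem fourier_integral_ellipsoid (a t : ℝ) (ha : 0 < a) (ht : 0 < t)
    (m : ℤ × ℤ × ℤ) (hm : m ≠ 0) (g : ℝ)
    (hg : g = Real.sqrt (a * ((m.1 : ℝ) ^ 2 + (m.2.1 : ℝ) ^ 2) + (m.2.2 : ℝ) ^ 2 / a ^ 2)) :
    (∫ u in {u : ℝ × ℝ × ℝ | (u.1 ^ 2 + u.2.1 ^ 2) / a + a ^ 2 * u.2.2 ^ 2 ≤ t},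
        Complex.exp (2 * (π : ℂ) * Complex.I *
          (((m.1 : ℝ) * u.1 + (m.2.1 : ℝ) * u.2.1 + (m.2.2 : ℝ) * u.2.2 : ℝ) : ℂ)))
      = ((-(Real.sqrt t * Real.cos (2 * π * g * Real.sqrt t)) / (π * g ^ 2)
          + Real.sin (2 * π * g * Real.sqrt t) / (2 * π ^ 2 * g ^ 3) : ℝ) : ℂ) :=
  fourier_integral_ellipsoid_general ha ht.le (ξ := (m.1, m.2.1, m.2.2))
    (by simpa [Prod.ext_iff] using hm) hg
end

section
/- The double series Σ_{r=0}^{∞} Σ_{s=0}^{∞} 2^{−r − 7s/12} / (2^{−r} + 2^{−s})^{17/12} converges and its sum is strictly less than 23.8. -/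
/-!
The kernel `K x y = x * y ^ (7/12) * (x + y) ^ (-17/12)` is homogeneous of degree `1/6`, and the
summand is `K (2⁻¹ ^ r) (2⁻¹ ^ s)`. It is therefore multiplied by `2⁻¹ ^ (1/6)` under the diagonal
shift `(r, s) ↦ (r + 1, s + 1)`, and the double sum is a geometric series times the sum over the
two coordinate axes `s = 0` and `r = 0`. On the axes the factor `(1 + 2⁻¹ ^ k) ^ (-17/12)`
increases to `1`: it is bounded by explicit rationals for `k < 6`, and by `1` afterwards.
-/

section DiagonalShift

theorem hasSum_prod_of_hasSum_diagonals {M : Type*} [AddCommMonoid M] [TopologicalSpace M]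
    [ContinuousAdd M] {f : ℕ × ℕ → M} {a b : M}
    (ha : HasSum (fun p : ℕ × ℕ => f (p.1 + p.2, p.1)) a)
    (hb : HasSum (fun p : ℕ × ℕ => f (p.1, p.1 + (p.2 + 1))) b) : HasSum f (a + b) := by
  let below : ℕ × ℕ → ℕ × ℕ := fun p => (p.1 + p.2, p.1)
  let above : ℕ × ℕ → ℕ × ℕ := fun p => (p.1, p.1 + (p.2 + 1))
  have below_inj : below.Injective := fun p q h => by grind
  have above_inj : above.Injective := fun p q h => by grind
  have range_below : Set.range below = {p | p.2 ≤ p.1} := by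
    ext ⟨r, s⟩
    exact ⟨by grind, fun h => ⟨(s, r - s), by grind⟩⟩
  have range_above : Set.range above = {p | p.2 ≤ p.1}ᶜ := by
    ext ⟨r, s⟩
    exact ⟨by grind, fun h => ⟨(r, s - r - 1), by grind⟩⟩
  refine (below_inj.hasSum_range_iff.mpr ha).add_isCompl ?_ (above_inj.hasSum_range_iff.mpr hb)
  rw [range_below, range_above]
  exact isCompl_compl

variable {𝕜 : Type*} [NormedDivisionRing 𝕜] {f : ℕ × ℕ → 𝕜} {ρ : 𝕜}

theorem apply_add_left_eq_pow_mul (hf : ∀ r s, f (r + 1, s + 1) = ρ * f (r, s)) (m r s : ℕ) :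
    f (m + r, m + s) = ρ ^ m * f (r, s) := by
  induction m with
  | zero => simp
  | succ m ih => rw [add_right_comm m 1 r, add_right_comm m 1 s, hf, ih, pow_succ', mul_assoc]

theorem hasSum_of_diagonal_shift [CompleteSpace 𝕜] (hρ : ‖ρ‖ < 1)
    (hf : ∀ r s, f (r + 1, s + 1) = ρ * f (r, s))
    (hleft : Summable fun k => ‖f (k, 0)‖) (hright : Summable fun k => ‖f (0, k + 1)‖) :
    HasSum f ((1 - ρ)⁻¹ * (∑' k, f (k, 0) + ∑' k, f (0, k + 1))) := by
  have geometric_mul {g : ℕ → 𝕜} (hg : Summable fun k => ‖g k‖) :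
      HasSum (fun p : ℕ × ℕ => ρ ^ p.1 * g p.2) ((1 - ρ)⁻¹ * ∑' k, g k) :=
    (hasSum_geometric_of_norm_lt_one hρ).mul hg.of_norm.hasSum
      (summable_mul_of_summable_norm (summable_norm_geometric_of_norm_lt_one hρ) hg)
  rw [mul_add]
  apply hasSum_prod_of_hasSum_diagonals
  · simpa only [← apply_add_left_eq_pow_mul hf, add_zero] using geometric_mul hleft
  · simpa only [← apply_add_left_eq_pow_mul hf, add_zero] using geometric_mul hright

end DiagonalShift

section PowerSeriesBounds

variable {w : ℕ → ℝ} {x : ℝ}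

theorem summable_mul_pow_of_le_one (hw₀ : ∀ k, 0 ≤ w k) (hw₁ : ∀ k, w k ≤ 1) (hx₀ : 0 ≤ x)
    (hx₁ : x < 1) : Summable fun k => w k * x ^ k :=
  (summable_geometric_of_lt_one hx₀ hx₁).of_nonneg_of_le
    (fun k => mul_nonneg (hw₀ k) (by positivity))
    (fun k => mul_le_of_le_one_left (by positivity) (hw₁ k))

theorem tsum_mul_pow_le {c : ℕ → ℝ} {a : ℝ} (n : ℕ) (hw₀ : ∀ k, 0 ≤ w k) (hw₁ : ∀ k, w k ≤ 1)
    (hwc : ∀ k < n, w k ≤ c k) (hx₀ : 0 ≤ x) (hxa : x ≤ a) (ha : a < 1) :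
    ∑' k, w k * x ^ k ≤ ∑ k ∈ Finset.range n, c k * a ^ k + a ^ n / (1 - a) := by
  have hs : Summable fun k => w k * x ^ k :=
    summable_mul_pow_of_le_one hw₀ hw₁ hx₀ (hxa.trans_lt ha)
  rw [← hs.sum_add_tsum_nat_add n]
  have head : ∑ k ∈ Finset.range n, w k * x ^ k ≤ ∑ k ∈ Finset.range n, c k * a ^ k := by
    refine Finset.sum_le_sum fun k hk => ?_
    have hwck := hwc k (Finset.mem_range.mp hk)
    exact mul_le_mul hwck (pow_le_pow_left₀ hx₀ hxa k) (by positivity) ((hw₀ k).trans hwck)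
  have tail : ∑' k, w (k + n) * x ^ (k + n) ≤ a ^ n / (1 - a) := by
    refine hasSum_le (fun k => ?_) ((summable_nat_add_iff n).mpr hs).hasSum
      ((hasSum_geometric_of_lt_one (hx₀.trans hxa) ha).mul_left (a ^ n))
    calc w (k + n) * x ^ (k + n) ≤ x ^ (k + n) := mul_le_of_le_one_left (by positivity) (hw₁ _)
      _ ≤ a ^ (k + n) := pow_le_pow_left₀ hx₀ hxa _
      _ = a ^ n * a ^ k := by rw [add_comm, pow_add]
  exact add_le_add head tail

end PowerSeriesBounds

section PowerKernel

variable {α β γ q : ℝ}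

/-- The kernel `x ^ α * y ^ β / (x + y) ^ γ` on pairs of positive reals, homogeneous of degree
`α + β - γ`. The denominator is written as a negative power. -/
noncomputable def powerKernel (α β γ x y : ℝ) : ℝ :=
  x ^ α * y ^ β * (x + y) ^ (-γ)

theorem powerKernel_swap (x y : ℝ) : powerKernel α β γ x y = powerKernel β α γ y x := by
  rw [powerKernel, powerKernel, mul_comm (x ^ α), add_comm x]

theorem powerKernel_mul_mul {c x y : ℝ} (hc : 0 < c) (hx : 0 ≤ x) (hy : 0 ≤ y) :
    powerKernel α β γ (c * x) (c * y) = c ^ (α + β - γ) * powerKernel α β γ x y := by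
  rw [sub_eq_add_neg, Real.rpow_add hc, Real.rpow_add hc]
  simp only [powerKernel]
  rw [← mul_add, Real.mul_rpow hc.le hx, Real.mul_rpow hc.le hy,
    Real.mul_rpow hc.le (add_nonneg hx hy)]
  ring

theorem powerKernel_pow_one (hq : 0 ≤ q) (k : ℕ) :
    powerKernel α β γ (q ^ k) 1 = (1 + q ^ k) ^ (-γ) * (q ^ α) ^ k := by
  rw [powerKernel, Real.one_rpow, mul_one, Real.rpow_pow_comm hq, mul_comm, add_comm]

theorem powerKernel_one_pow (hq : 0 ≤ q) (k : ℕ) :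
    powerKernel α β γ 1 (q ^ k) = (1 + q ^ k) ^ (-γ) * (q ^ β) ^ k := by
  rw [powerKernel_swap, powerKernel_pow_one hq]

theorem one_add_pow_rpow_neg_le_one (hq : 0 ≤ q) (hγ : 0 ≤ γ) (k : ℕ) :
    (1 + q ^ k) ^ (-γ) ≤ 1 :=
  Real.rpow_le_one_of_one_le_of_nonpos (le_add_of_nonneg_right (by positivity)) (by linarith)

theorem hasSum_powerKernel_pow (hq₀ : 0 < q) (hq₁ : q < 1) (hα : 0 < α) (hβ : 0 < β)
    (hγ : 0 ≤ γ) (hαβγ : γ < α + β) :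
    HasSum (fun p : ℕ × ℕ => powerKernel α β γ (q ^ p.1) (q ^ p.2))
      ((1 - q ^ (α + β - γ))⁻¹ * (∑' k : ℕ, powerKernel α β γ (q ^ k) 1 +
        ∑' k : ℕ, powerKernel α β γ 1 (q ^ (k + 1)))) := by
  have ratio_lt_one : ‖q ^ (α + β - γ)‖ < 1 := by
    rw [Real.norm_of_nonneg (by positivity)]
    exact Real.rpow_lt_one hq₀.le hq₁ (by linarith)
  have axis_summable {δ : ℝ} (hδ : 0 < δ) :
      Summable fun k : ℕ => (1 + q ^ k) ^ (-γ) * (q ^ δ) ^ k :=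
    summable_mul_pow_of_le_one (fun k => by positivity) (one_add_pow_rpow_neg_le_one hq₀.le hγ)
      (by positivity) (Real.rpow_lt_one hq₀.le hq₁ hδ)
  have diagonal_shift (r s : ℕ) : powerKernel α β γ (q ^ (r + 1)) (q ^ (s + 1)) =
      q ^ (α + β - γ) * powerKernel α β γ (q ^ r) (q ^ s) := by
    rw [pow_succ', pow_succ', powerKernel_mul_mul hq₀ (by positivity) (by positivity)]
  have axis_sums := hasSum_of_diagonal_shift
    (f := fun p : ℕ × ℕ => powerKernel α β γ (q ^ p.1) (q ^ p.2)) ratio_lt_one diagonal_shift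
    (by simpa only [pow_zero, powerKernel_pow_one hq₀.le] using (axis_summable hα).norm)
    (by simpa only [pow_zero, powerKernel_one_pow hq₀.le]
      using ((summable_nat_add_iff 1).mpr (axis_summable hβ)).norm)
  simpa only [pow_zero] using axis_sums

end PowerKernel

theorem rpow_intCast_div_natCast_le {x y : ℝ} {z : ℤ} {n : ℕ} (hx : 0 ≤ x) (hy : 0 ≤ y)
    (hn : n ≠ 0) (h : x ^ z ≤ y ^ n) : x ^ ((z : ℝ) / n) ≤ y := by
  refine le_of_pow_le_pow_left₀ hn hy ?_
  rwa [← Real.rpow_mul_natCast hx, div_mul_cancel₀ _ (Nat.cast_ne_zero.mpr hn), Real.rpow_intCast]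

/-- Upper bounds for `(1 + 2⁻¹ ^ k) ^ (-17/12)`, rounded up to four decimals for `k < 6`. -/
noncomputable def weightBound : ℕ → ℝ
  | 0 => 0.3746
  | 1 => 0.5631
  | 2 => 0.7290
  | 3 => 0.8464
  | 4 => 0.9178
  | 5 => 0.9574
  | _ => 1

theorem one_add_inv_two_pow_rpow_le_weightBound {k : ℕ} (hk : k < 6) :
    (1 + (2⁻¹ : ℝ) ^ k) ^ (-(17 / 12) : ℝ) ≤ weightBound k := by
  have hexp : (-(17 / 12) : ℝ) = ((-17 : ℤ) : ℝ) / (12 : ℕ) := by norm_num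
  rw [hexp]
  apply rpow_intCast_div_natCast_le (by positivity)
  all_goals interval_cases k <;> norm_num [weightBound]

theorem inv_two_rpow_one_sixth_le : (2⁻¹ : ℝ) ^ (1 / 6 : ℝ) ≤ 0.891 := by
  simpa using rpow_intCast_div_natCast_le (x := 2⁻¹) (y := 0.891) (z := 1) (n := 6)
    (by norm_num) (by norm_num) (by norm_num) (by norm_num)

theorem inv_two_rpow_seven_twelfths_le : (2⁻¹ : ℝ) ^ (7 / 12 : ℝ) ≤ 0.6675 := by
  simpa using rpow_intCast_div_natCast_le (x := 2⁻¹) (y := 0.6675) (z := 7) (n := 12)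
    (by norm_num) (by norm_num) (by norm_num) (by norm_num)

theorem tsum_powerKernel_inv_two_pow_one_le :
    ∑' k : ℕ, powerKernel 1 (7 / 12) (17 / 12) (2⁻¹ ^ k) 1 ≤ 1.063 := by
  simp only [powerKernel_pow_one (inv_nonneg.mpr zero_le_two)]
  refine (tsum_mul_pow_le (c := weightBound) (a := 2⁻¹) 6 (fun k => by positivity)
    (one_add_pow_rpow_neg_le_one (by norm_num) (by norm_num))
    (fun k => one_add_inv_two_pow_rpow_le_weightBound) (by positivity) (Real.rpow_one _).le
    (by norm_num)).trans ?_
  norm_num [Finset.sum_range_succ, weightBound]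

theorem tsum_powerKernel_one_inv_two_pow_succ_le :
    ∑' k : ℕ, powerKernel 1 (7 / 12) (17 / 12) 1 (2⁻¹ ^ (k + 1)) ≤ 1.528 := by
  simp only [powerKernel_one_pow (inv_nonneg.mpr zero_le_two)]
  have shifted_le := tsum_mul_pow_le (w := fun k => (1 + (2⁻¹ : ℝ) ^ (k + 1)) ^ (-(17 / 12) : ℝ))
    (c := fun k => weightBound (k + 1)) 5 (fun k => by positivity)
    (fun k => one_add_pow_rpow_neg_le_one (by norm_num) (by norm_num) (k + 1))
    (fun k hk => one_add_inv_two_pow_rpow_le_weightBound (by lia)) (by positivity)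
    inv_two_rpow_seven_twelfths_le (by norm_num)
  simp only [pow_succ, ← mul_assoc, tsum_mul_right] at shifted_le ⊢
  refine (mul_le_mul shifted_le inv_two_rpow_seven_twelfths_le (by positivity) ?_).trans ?_
  all_goals norm_num [Finset.sum_range_succ, weightBound]

theorem two_rpow_div_eq_powerKernel (r s : ℕ) :
    (2 : ℝ) ^ (-(r : ℝ) - 7 * (s : ℝ) / 12) /
        ((2 : ℝ) ^ (-(r : ℝ)) + (2 : ℝ) ^ (-(s : ℝ))) ^ ((17 : ℝ) / 12) =
      powerKernel 1 (7 / 12) (17 / 12) (2⁻¹ ^ r) (2⁻¹ ^ s) := by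
  have two_rpow_neg (k : ℕ) : (2 : ℝ) ^ (-(k : ℝ)) = 2⁻¹ ^ k := by
    rw [Real.rpow_neg_eq_inv_rpow, Real.rpow_natCast]
  have numerator : (2 : ℝ) ^ (-(r : ℝ) - 7 * (s : ℝ) / 12) =
      2⁻¹ ^ r * (2⁻¹ ^ s) ^ (7 / 12 : ℝ) := by
    rw [← two_rpow_neg, ← two_rpow_neg, ← Real.rpow_mul zero_le_two, ← Real.rpow_add two_pos]
    ring_nf
  rw [powerKernel, numerator, two_rpow_neg, two_rpow_neg, Real.rpow_one,
    Real.rpow_neg (by positivity), div_eq_mul_inv]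

/-- The double series `∑_{r,s ≥ 0} 2^{−r−7s/12}/(2^{−r}+2^{−s})^{17/12}` converges and its
sum is strictly less than `23.8`. -/
theorem double_series_lt_23_8 :
    Summable (fun p : ℕ × ℕ =>
      (2 : ℝ) ^ (-(p.1 : ℝ) - 7 * (p.2 : ℝ) / 12) /
        ((2 : ℝ) ^ (-(p.1 : ℝ)) + (2 : ℝ) ^ (-(p.2 : ℝ))) ^ ((17 : ℝ) / 12)) ∧
      (∑' p : ℕ × ℕ,
        (2 : ℝ) ^ (-(p.1 : ℝ) - 7 * (p.2 : ℝ) / 12) /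
          ((2 : ℝ) ^ (-(p.1 : ℝ)) + (2 : ℝ) ^ (-(p.2 : ℝ))) ^ ((17 : ℝ) / 12)) < 23.8 := by
  simp only [two_rpow_div_eq_powerKernel]
  have hsum := hasSum_powerKernel_pow (q := 2⁻¹) (α := 1) (β := 7 / 12) (γ := 17 / 12)
    (by norm_num) (by norm_num) (by norm_num) (by norm_num) (by norm_num) (by norm_num)
  refine ⟨hsum.summable, ?_⟩
  have degree : (1 + 7 / 12 - 17 / 12 : ℝ) = 1 / 6 := by norm_num
  rw [hsum.tsum_eq, degree, inv_mul_lt_iff₀ (by linarith [inv_two_rpow_one_sixth_le])]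
  linarith [tsum_powerKernel_inv_two_pow_one_le, tsum_powerKernel_one_inv_two_pow_succ_le,
    inv_two_rpow_one_sixth_le]
end

section
/- The double series Σ_{r=0}^{∞} Σ_{s=0}^{∞} 2^{−r/2 − 5s/12} / (2^{−r} + 2^{−s})^{7/12} converges and its sum is strictly less than 27. -/
/-!
The summand is `K (2⁻ʳ) (2⁻ˢ)` for the kernel `K x y = x ^ (1/2) * y ^ (5/12) / (x + y) ^ (7/12)`,
which is homogeneous of degree `1/3`. Along each diagonal `r - s = const` the summands therefore
form a geometric progression of ratio `2 ^ (-1/3)`, so the double series equals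
`(1 - 2 ^ (-1/3))⁻¹` times the sum of the summands with `r = 0` or `s = 0`. Those two simple series
are dominated by geometric ones because `K x 1 ≤ x ^ (1/2)` and `K 1 y ≤ y ^ (5/12)`; nine explicit
terms and the geometric tails leave enough room below `27`.
-/

open Finset

section DiagonalSums

/-- The parametrisation of `ℕ × ℕ` by diagonals: `(m, k)` is sent to the `m`-th point of the
diagonal `r - s = k`, counted from the axes. -/
def diagonalEquiv : ℕ × ℤ ≃ ℕ × ℕ where
  toFun p := (p.1 + p.2.toNat, p.1 + (-p.2).toNat)
  invFun p := (min p.1 p.2, (p.1 : ℤ) - p.2)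
  left_inv := by rintro ⟨m, k⟩; ext <;> dsimp only <;> omega
  right_inv := by rintro ⟨r, s⟩; ext <;> dsimp only <;> omega

theorem apply_diagonalEquiv_of_apply_succ_succ {M : Type*} [Monoid M] {f : ℕ × ℕ → M} {q : M}
    (hf : ∀ r s, f (r + 1, s + 1) = q * f (r, s)) (m : ℕ) (k : ℤ) :
    f (diagonalEquiv (m, k)) = q ^ m * f (k.toNat, (-k).toNat) := by
  change f (m + k.toNat, m + (-k).toNat) = _
  induction m with
  | zero => simp
  | succ m ih => rw [add_right_comm m 1, add_right_comm m 1, hf, ih, pow_succ', mul_assoc]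

variable {𝕜 : Type*} [NormedField 𝕜] [CompleteSpace 𝕜] {q : 𝕜}

theorem hasSum_geometric_mul_of_summable_norm {ι : Type*} {g : ι → 𝕜}
    (hq : ‖q‖ < 1) (hg : Summable fun i => ‖g i‖) :
    HasSum (fun p : ℕ × ι => q ^ p.1 * g p.2) ((1 - q)⁻¹ * ∑' i, g i) :=
  (hasSum_geometric_of_norm_lt_one hq).mul hg.of_norm.hasSum
    (summable_mul_of_summable_norm (summable_norm_geometric_of_norm_lt_one hq) hg)

theorem hasSum_of_apply_succ_succ {f : ℕ × ℕ → 𝕜} (hq : ‖q‖ < 1)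
    (hf : ∀ r s, f (r + 1, s + 1) = q * f (r, s))
    (hrow : Summable fun r => ‖f (r, 0)‖) (hcol : Summable fun s => ‖f (0, s + 1)‖) :
    HasSum f ((1 - q)⁻¹ * (∑' r, f (r, 0) + ∑' s, f (0, s + 1))) := by
  let g (k : ℤ) : 𝕜 := f (k.toNat, (-k).toNat)
  have hg_nat (n : ℕ) : g n = f (n, 0) := by simp [g]
  have hg_neg (n : ℕ) : g (-((n : ℤ) + 1)) = f (0, n + 1) := rfl
  have hg_norm : Summable fun k => ‖g k‖ :=
    .of_nat_of_neg_add_one (by simpa only [hg_nat] using hrow) (by simpa only [hg_neg] using hcol)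
  have hg_tsum : ∑' k, g k = ∑' r, f (r, 0) + ∑' s, f (0, s + 1) := by
    simpa only [hg_nat, hg_neg] using tsum_of_nat_of_neg_add_one (f := g)
      (by simpa only [hg_nat] using hrow.of_norm) (by simpa only [hg_neg] using hcol.of_norm)
  have hdiag : f ∘ diagonalEquiv = fun p : ℕ × ℤ => q ^ p.1 * g p.2 :=
    funext fun p => apply_diagonalEquiv_of_apply_succ_succ hf p.1 p.2
  rw [← diagonalEquiv.hasSum_iff, hdiag, ← hg_tsum]
  exact hasSum_geometric_mul_of_summable_norm hq hg_norm

end DiagonalSums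

section GeometricTails

theorem tsum_le_sum_range_add_of_le_geometric {u : ℕ → ℝ} {C x : ℝ} (hx₀ : 0 ≤ x) (hx₁ : x < 1)
    (hu₀ : ∀ i, 0 ≤ u i) (hu : ∀ i, u i ≤ C * x ^ i) (n : ℕ) :
    ∑' i, u i ≤ ∑ i ∈ range n, u i + C * (x ^ n / (1 - x)) := by
  have hgeom : HasSum (fun i => C * x ^ (i + n)) (C * (x ^ n / (1 - x))) := by
    simpa only [pow_add, div_eq_inv_mul] using
      ((hasSum_geometric_of_lt_one hx₀ hx₁).mul_right (x ^ n)).mul_left C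
  have husum : Summable u :=
    .of_nonneg_of_le hu₀ hu ((summable_geometric_of_lt_one hx₀ hx₁).mul_left C)
  have htail : Summable fun i => u (i + n) := (summable_nat_add_iff n).2 husum
  rw [← husum.sum_add_tsum_nat_add n]
  gcongr
  exact hasSum_le (fun i => hu (i + n)) htail.hasSum hgeom

theorem pow_div_one_sub_le_pow_div_one_sub {x y : ℝ} (hx : 0 ≤ x) (hxy : x ≤ y) (hy : y < 1)
    (n : ℕ) : x ^ n / (1 - x) ≤ y ^ n / (1 - y) := by
  have hy₀ : 0 ≤ y := hx.trans hxy
  have : 0 < 1 - y := sub_pos.2 hy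
  gcongr

end GeometricTails

section RationalExponents

variable {x d : ℝ} {n : ℕ}

theorem rpow_natCast_div_natCast_pow (hx : 0 ≤ x) (p : ℕ) (hn : n ≠ 0) :
    (x ^ (p / n : ℝ)) ^ n = x ^ p := by
  rw [div_eq_mul_inv, Real.rpow_mul hx, Real.rpow_natCast,
    Real.rpow_inv_natCast_pow (by positivity) hn]

theorem rpow_natCast_div_natCast_le (hx : 0 ≤ x) (hd : 0 ≤ d) {p : ℕ} (hn : n ≠ 0)
    (h : x ^ p ≤ d ^ n) : x ^ (p / n : ℝ) ≤ d :=
  le_of_pow_le_pow_left₀ hn hd ((rpow_natCast_div_natCast_pow hx p hn).trans_le h)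

end RationalExponents

/-- The kernel `x ^ a * y ^ b / (x + y) ^ c`, homogeneous of degree `a + b - c`; the double series
sums its values at pairs of powers of `1 / 2`. -/
noncomputable def powKernel (a b c x y : ℝ) : ℝ := x ^ a * y ^ b / (x + y) ^ c

namespace powKernel

variable {a b c x y t : ℝ}

theorem nonneg (hx : 0 ≤ x) (hy : 0 ≤ y) : 0 ≤ powKernel a b c x y := by
  unfold powKernel
  positivity

theorem swap (a b c x y : ℝ) : powKernel a b c x y = powKernel b a c y x := by
  rw [powKernel, powKernel, mul_comm, add_comm]

theorem mul_mul (ht : 0 < t) (hx : 0 ≤ x) (hy : 0 ≤ y) :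
    powKernel a b c (t * x) (t * y) = t ^ (a + b - c) * powKernel a b c x y := by
  rw [powKernel, powKernel, ← mul_add, Real.mul_rpow ht.le hx, Real.mul_rpow ht.le hy,
    Real.mul_rpow ht.le (add_nonneg hx hy), Real.rpow_sub ht, Real.rpow_add ht,
    mul_mul_mul_comm, mul_div_mul_comm]

theorem right_one_le (hx : 0 ≤ x) (hc : 0 ≤ c) : powKernel a b c x 1 ≤ x ^ a := by
  rw [powKernel, Real.one_rpow, mul_one]
  exact div_le_self (by positivity) (Real.one_le_rpow (by linarith) hc)

theorem left_one_le (hy : 0 ≤ y) (hc : 0 ≤ c) : powKernel a b c 1 y ≤ y ^ b :=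
  (swap a b c 1 y).trans_le (right_one_le hy hc)

theorem natCast_div_pow (hx : 0 ≤ x) (hy : 0 ≤ y) (k l m : ℕ) {n : ℕ} (hn : n ≠ 0) :
    powKernel (k / n) (l / n) (m / n) x y ^ n = x ^ k * y ^ l / (x + y) ^ m := by
  rw [powKernel, div_pow, mul_pow, rpow_natCast_div_natCast_pow hx k hn,
    rpow_natCast_div_natCast_pow hy l hn, rpow_natCast_div_natCast_pow (add_nonneg hx hy) m hn]

section PowersOfRatio

variable (ht₀ : 0 < t) (ht₁ : t < 1) (hc : 0 ≤ c)
include ht₀ hc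

theorem pow_one_le_geometric (i : ℕ) : powKernel a b c (t ^ i) 1 ≤ 1 * (t ^ a) ^ i := by
  rw [one_mul, Real.rpow_pow_comm ht₀.le]
  exact right_one_le (by positivity) hc

theorem one_pow_succ_le_geometric (j : ℕ) :
    powKernel a b c 1 (t ^ (j + 1)) ≤ t ^ b * (t ^ b) ^ j := by
  rw [← pow_succ', Real.rpow_pow_comm ht₀.le]
  exact left_one_le (by positivity) hc

include ht₁

theorem hasSum_pow_pow (ha : 0 < a) (hb : 0 < b) (habc : c < a + b) :
    HasSum (fun p : ℕ × ℕ => powKernel a b c (t ^ p.1) (t ^ p.2))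
      ((1 - t ^ (a + b - c))⁻¹ *
        (∑' i : ℕ, powKernel a b c (t ^ i) 1 + ∑' j : ℕ, powKernel a b c 1 (t ^ (j + 1)))) := by
  have hlt {e : ℝ} (he : 0 < e) : t ^ e < 1 := Real.rpow_lt_one ht₀.le ht₁ he
  have hgeom {e : ℝ} (he : 0 < e) : Summable fun i : ℕ => (t ^ e) ^ i :=
    summable_geometric_of_lt_one (by positivity) (hlt he)
  have hnonneg (i j : ℕ) : 0 ≤ powKernel a b c (t ^ i) (t ^ j) :=
    nonneg (by positivity) (by positivity)
  have hnorm : ‖t ^ (a + b - c)‖ < 1 := by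
    rw [Real.norm_of_nonneg (by positivity)]
    exact hlt (sub_pos.2 habc)
  have hdiag (r s : ℕ) : powKernel a b c (t ^ (r + 1)) (t ^ (s + 1)) =
      t ^ (a + b - c) * powKernel a b c (t ^ r) (t ^ s) := by
    rw [pow_succ', pow_succ', mul_mul ht₀ (by positivity) (by positivity)]
  have hrow : Summable fun i : ℕ => ‖powKernel a b c (t ^ i) (t ^ 0)‖ := by
    refine .of_nonneg_of_le (fun _ => norm_nonneg _) (fun i => ?_) ((hgeom ha).mul_left 1)
    rw [Real.norm_of_nonneg (hnonneg i 0), pow_zero]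
    exact pow_one_le_geometric ht₀ hc i
  have hcol : Summable fun j : ℕ => ‖powKernel a b c (t ^ 0) (t ^ (j + 1))‖ := by
    refine .of_nonneg_of_le (fun _ => norm_nonneg _) (fun j => ?_) ((hgeom hb).mul_left (t ^ b))
    rw [Real.norm_of_nonneg (hnonneg 0 (j + 1)), pow_zero]
    exact one_pow_succ_le_geometric ht₀ hc j
  simpa only [pow_zero] using hasSum_of_apply_succ_succ
    (f := fun p : ℕ × ℕ => powKernel a b c (t ^ p.1) (t ^ p.2)) hnorm hdiag hrow hcol

theorem tsum_pow_one_le (ha : 0 < a) (n : ℕ) :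
    ∑' i : ℕ, powKernel a b c (t ^ i) 1 ≤
      ∑ i ∈ range n, powKernel a b c (t ^ i) 1 + (t ^ a) ^ n / (1 - t ^ a) := by
  simpa only [one_mul] using tsum_le_sum_range_add_of_le_geometric (by positivity)
    (Real.rpow_lt_one ht₀.le ht₁ ha) (fun _ => nonneg (by positivity) zero_le_one)
    (pow_one_le_geometric ht₀ hc) n

theorem tsum_one_pow_succ_le (hb : 0 < b) (n : ℕ) :
    ∑' j : ℕ, powKernel a b c 1 (t ^ (j + 1)) ≤
      ∑ j ∈ range n, powKernel a b c 1 (t ^ (j + 1)) + (t ^ b) ^ (n + 1) / (1 - t ^ b) := by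
  rw [pow_succ', mul_div_assoc]
  exact tsum_le_sum_range_add_of_le_geometric (by positivity)
    (Real.rpow_lt_one ht₀.le ht₁ hb) (fun _ => nonneg zero_le_one (by positivity))
    (one_pow_succ_le_geometric ht₀ hc) n

end PowersOfRatio

end powKernel

/-- The summand of the double series, as a value of the kernel. -/
noncomputable def dyadicTerm (r s : ℕ) : ℝ :=
  powKernel (1 / 2) (5 / 12) (7 / 12) ((1 / 2) ^ r) ((1 / 2) ^ s)

theorem dyadicTerm_eq (r s : ℕ) :
    dyadicTerm r s = (2 : ℝ) ^ (-(r : ℝ) / 2 - 5 * (s : ℝ) / 12) /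
      ((2 : ℝ) ^ (-(r : ℝ)) + (2 : ℝ) ^ (-(s : ℝ))) ^ ((7 : ℝ) / 12) := by
  have hpow (n : ℕ) : (1 / 2 : ℝ) ^ n = 2 ^ (-(n : ℝ)) := by
    rw [Real.rpow_neg zero_le_two, Real.rpow_natCast, one_div, inv_pow]
  rw [dyadicTerm, powKernel, hpow, hpow, ← Real.rpow_mul zero_le_two,
    ← Real.rpow_mul zero_le_two, ← Real.rpow_add zero_lt_two]
  ring_nf

theorem dyadicTerm_pow_twelve (r s : ℕ) :
    dyadicTerm r s ^ 12 =
      ((1 / 2) ^ r) ^ 6 * ((1 / 2) ^ s) ^ 5 / ((1 / 2) ^ r + (1 / 2) ^ s) ^ 7 := by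
  have hexponent : (1 / 2 : ℝ) = (6 : ℕ) / (12 : ℕ) := by norm_num
  rw [← powKernel.natCast_div_pow (by positivity) (by positivity) 6 5 7 (by decide : 12 ≠ 0),
    ← hexponent, dyadicTerm, Nat.cast_ofNat, Nat.cast_ofNat, Nat.cast_ofNat]

theorem dyadicTerm_le {r s : ℕ} {d : ℝ} (hd : 0 ≤ d)
    (h : ((1 / 2) ^ r) ^ 6 * ((1 / 2) ^ s) ^ 5 / ((1 / 2) ^ r + (1 / 2) ^ s) ^ 7 ≤ d ^ 12) :
    dyadicTerm r s ≤ d :=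
  le_of_pow_le_pow_left₀ (by decide : 12 ≠ 0) hd ((dyadicTerm_pow_twelve r s).trans_le h)

theorem hasSum_dyadicTerm :
    HasSum (fun p : ℕ × ℕ => dyadicTerm p.1 p.2)
      ((1 - (1 / 2) ^ (1 / 3 : ℝ))⁻¹ *
        (∑' r : ℕ, dyadicTerm r 0 + ∑' s : ℕ, dyadicTerm 0 (s + 1))) := by
  have hdegree : (1 / 2 + 5 / 12 - 7 / 12 : ℝ) = 1 / 3 := by norm_num
  simpa only [dyadicTerm, pow_zero, hdegree] using powKernel.hasSum_pow_pow (t := 1 / 2)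
    (a := 1 / 2) (b := 5 / 12) (c := 7 / 12)
    (by norm_num) (by norm_num) (by norm_num) (by norm_num) (by norm_num) (by norm_num)

theorem tsum_dyadicTerm_zero_right_le :
    ∑' r : ℕ, dyadicTerm r 0 ≤ 2.239 + 0.7072 ^ 5 / (1 - 0.7072) := by
  have hterms : ∑ r ∈ range 5, dyadicTerm r 0 ≤ 0.668 + 0.559 + 0.439 + 0.331 + 0.242 := by
    simp only [sum_range_succ, sum_range_zero, zero_add]
    gcongr <;> apply dyadicTerm_le <;> norm_num
  have hratio : (1 / 2 : ℝ) ^ (1 / 2 : ℝ) ≤ 0.7072 :=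
    mod_cast rpow_natCast_div_natCast_le (x := 1 / 2) (d := 0.7072) (p := 1) (n := 2)
      (by norm_num) (by norm_num) (by norm_num) (by norm_num)
  have htail := pow_div_one_sub_le_pow_div_one_sub (by positivity) hratio (by norm_num) 5
  have hsum := powKernel.tsum_pow_one_le (t := 1 / 2) (a := 1 / 2) (b := 5 / 12) (c := 7 / 12)
    (by norm_num) (by norm_num) (by norm_num) (by norm_num) 5
  simp only [dyadicTerm, pow_zero] at hterms ⊢
  linarith

theorem tsum_dyadicTerm_zero_left_succ_le :
    ∑' s : ℕ, dyadicTerm 0 (s + 1) ≤ 1.783 + 0.7492 ^ 5 / (1 - 0.7492) := by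
  have hterms : ∑ s ∈ range 4, dyadicTerm 0 (s + 1) ≤ 0.592 + 0.493 + 0.393 + 0.305 := by
    simp only [sum_range_succ, sum_range_zero, zero_add]
    gcongr <;> apply dyadicTerm_le <;> norm_num
  have hratio : (1 / 2 : ℝ) ^ (5 / 12 : ℝ) ≤ 0.7492 :=
    mod_cast rpow_natCast_div_natCast_le (x := 1 / 2) (d := 0.7492) (p := 5) (n := 12)
      (by norm_num) (by norm_num) (by norm_num) (by norm_num)
  have htail := pow_div_one_sub_le_pow_div_one_sub (by positivity) hratio (by norm_num) 5
  have hsum := powKernel.tsum_one_pow_succ_le (t := 1 / 2) (a := 1 / 2) (b := 5 / 12)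
    (c := 7 / 12) (by norm_num) (by norm_num) (by norm_num) (by norm_num) 4
  simp only [dyadicTerm, pow_zero] at hterms ⊢
  linarith

/-- The double series `∑_{r,s ≥ 0} 2^{−r/2−5s/12}/(2^{−r}+2^{−s})^{7/12}` converges and its
sum is strictly less than `27`. -/
theorem double_series_lt_27 :
    Summable (fun p : ℕ × ℕ =>
      (2 : ℝ) ^ (-(p.1 : ℝ) / 2 - 5 * (p.2 : ℝ) / 12) /
        ((2 : ℝ) ^ (-(p.1 : ℝ)) + (2 : ℝ) ^ (-(p.2 : ℝ))) ^ ((7 : ℝ) / 12)) ∧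
      (∑' p : ℕ × ℕ,
        (2 : ℝ) ^ (-(p.1 : ℝ) / 2 - 5 * (p.2 : ℝ) / 12) /
          ((2 : ℝ) ^ (-(p.1 : ℝ)) + (2 : ℝ) ^ (-(p.2 : ℝ))) ^ ((7 : ℝ) / 12)) < 27 := by
  simp only [← dyadicTerm_eq]
  refine ⟨hasSum_dyadicTerm.summable, ?_⟩
  have hratio : (1 / 2 : ℝ) ^ (1 / 3 : ℝ) ≤ 0.79371 :=
    mod_cast rpow_natCast_div_natCast_le (x := 1 / 2) (d := 0.79371) (p := 1) (n := 3)
      (by norm_num) (by norm_num) (by norm_num) (by norm_num)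
  have hrow := tsum_dyadicTerm_zero_right_le
  have hcol := tsum_dyadicTerm_zero_left_succ_le
  rw [hasSum_dyadicTerm.tsum_eq, inv_mul_lt_iff₀ (by linarith)]
  linarith
end

section
/- The double series Σ_{r=0}^{∞} Σ_{s=0}^{∞} 2^{r + 7s/12} / (2^{r} + 2^{s})^{29/12} converges and its sum is at most 4. -/
/-!
Put `x = 2 ^ r`, `y = 2 ^ s` and `θ = 5 / 12`, so that the general term is
`x * y ^ (1 - θ) / (x + y) ^ (2 + θ)`. Since `(x + y) ^ 2 ≥ 4 * x * y` and `x + y ≥ x`, it is at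
most `x ^ (-θ) * y ^ (-θ) / 4`, and the double series is dominated by a product of two geometric
series of ratio `2 ^ (-5 / 12)`. As `4 ^ 12 ≤ 2 ^ 5 * 3 ^ 12`, this ratio is at most `3 / 4`, which
gives the bound `4 * 4 / 4`.
-/

section Domination

variable {x y θ : ℝ}

theorem four_mul_mul_rpow_le_add_rpow (hx : 0 ≤ x) (hy : 0 ≤ y) (hθ : 0 ≤ θ) :
    4 * x * y * x ^ θ ≤ (x + y) ^ (2 + θ) := by
  rw [Real.rpow_add_of_nonneg (add_nonneg hx hy) zero_le_two hθ, Real.rpow_two]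
  gcongr
  · exact four_mul_le_sq_add x y
  · exact le_add_of_nonneg_right hy

theorem mul_rpow_div_add_rpow_le (hx : 0 < x) (hy : 0 < y) (hθ : 0 ≤ θ) :
    x * y ^ (1 - θ) / (x + y) ^ (2 + θ) ≤ x ^ (-θ) * y ^ (-θ) / 4 := by
  calc x * y ^ (1 - θ) / (x + y) ^ (2 + θ)
      ≤ x * y ^ (1 - θ) / (4 * x * y * x ^ θ) := by
        gcongr
        exact four_mul_mul_rpow_le_add_rpow hx.le hy.le hθ
    _ = x ^ (-θ) * y ^ (-θ) / 4 := by
        rw [sub_eq_add_neg, Real.rpow_add hy, Real.rpow_one, Real.rpow_neg hx.le]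
        field_simp

variable {ι κ : Type*} {u : ι → ℝ} {v : κ → ℝ}

theorem summable_mul_rpow_div_add_rpow (hu : ∀ i, 0 < u i) (hv : ∀ j, 0 < v j) (hθ : 0 ≤ θ)
    (hsu : Summable fun i ↦ u i ^ (-θ)) (hsv : Summable fun j ↦ v j ^ (-θ)) :
    Summable fun p : ι × κ ↦ u p.1 * v p.2 ^ (1 - θ) / (u p.1 + v p.2) ^ (2 + θ) := by
  have hprod := summable_mul_of_summable_norm hsu.norm hsv.norm
  refine (hprod.div_const 4).of_nonneg_of_le (fun p ↦ ?_)
    fun p ↦ mul_rpow_div_add_rpow_le (hu p.1) (hv p.2) hθ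
  have := hu p.1
  have := hv p.2
  positivity

theorem tsum_mul_rpow_div_add_rpow_le (hu : ∀ i, 0 < u i) (hv : ∀ j, 0 < v j) (hθ : 0 ≤ θ)
    (hsu : Summable fun i ↦ u i ^ (-θ)) (hsv : Summable fun j ↦ v j ^ (-θ)) :
    ∑' p : ι × κ, u p.1 * v p.2 ^ (1 - θ) / (u p.1 + v p.2) ^ (2 + θ) ≤
      (∑' i, u i ^ (-θ)) * (∑' j, v j ^ (-θ)) / 4 := by
  have hprod := summable_mul_of_summable_norm hsu.norm hsv.norm
  rw [hsu.tsum_mul_tsum hsv hprod, ← tsum_div_const]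
  exact (summable_mul_rpow_div_add_rpow hu hv hθ hsu hsv).tsum_le_tsum
    (fun p ↦ mul_rpow_div_add_rpow_le (hu p.1) (hv p.2) hθ) (hprod.div_const 4)

end Domination

theorem hasSum_pow_rpow_neg {b θ : ℝ} (hb : 1 < b) (hθ : 0 < θ) :
    HasSum (fun n : ℕ ↦ (b ^ n) ^ (-θ)) (1 - b ^ (-θ))⁻¹ := by
  have hb₀ : 0 ≤ b := zero_le_one.trans hb.le
  simp only [← Real.rpow_pow_comm hb₀]
  exact hasSum_geometric_of_lt_one (Real.rpow_nonneg hb₀ _)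
    (Real.rpow_lt_one_of_one_lt_of_neg hb (neg_lt_zero.mpr hθ))

theorem two_rpow_neg_five_div_twelve_le : (2 : ℝ) ^ (-(5 / 12) : ℝ) ≤ 3 / 4 := by
  have hpow : ((2 : ℝ) ^ (-(5 / 12) : ℝ)) ^ 12 = (2 ^ 5)⁻¹ := by
    rw [← Real.rpow_mul_natCast zero_le_two, ← Real.rpow_natCast, ← Real.rpow_neg zero_le_two]
    norm_num
  refine le_of_pow_le_pow_left₀ (n := 12) (by norm_num) (by norm_num) ?_
  rw [hpow]
  norm_num

theorem tsum_two_pow_rpow_neg_five_div_twelve_le :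
    ∑' n : ℕ, ((2 : ℝ) ^ n) ^ (-(5 / 12) : ℝ) ≤ 4 := by
  rw [(hasSum_pow_rpow_neg one_lt_two (by norm_num)).tsum_eq]
  apply inv_le_of_inv_le₀ (by norm_num)
  linarith [two_rpow_neg_five_div_twelve_le]

theorem two_rpow_div_add_rpow_eq (r s : ℕ) :
    (2 : ℝ) ^ ((r : ℝ) + 7 * (s : ℝ) / 12) /
        ((2 : ℝ) ^ (r : ℝ) + (2 : ℝ) ^ (s : ℝ)) ^ ((29 : ℝ) / 12) =
      2 ^ r * (2 ^ s) ^ (1 - 5 / 12 : ℝ) / (2 ^ r + 2 ^ s) ^ (2 + 5 / 12 : ℝ) := by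
  have hnum : 7 * (s : ℝ) / 12 = s * (1 - 5 / 12) := by ring
  have hden : (29 : ℝ) / 12 = 2 + 5 / 12 := by norm_num
  rw [Real.rpow_add two_pos, hnum, Real.rpow_natCast_mul zero_le_two, hden]
  simp only [Real.rpow_natCast]

/-- The double series `∑_{r,s ≥ 0} 2^{r+7s/12}/(2^{r}+2^{s})^{29/12}` converges and its
sum is at most `4`. -/
theorem double_series_le_4 :
    Summable (fun p : ℕ × ℕ =>
      (2 : ℝ) ^ ((p.1 : ℝ) + 7 * (p.2 : ℝ) / 12) /
        ((2 : ℝ) ^ ((p.1 : ℝ)) + (2 : ℝ) ^ ((p.2 : ℝ))) ^ ((29 : ℝ) / 12)) ∧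
      (∑' p : ℕ × ℕ,
        (2 : ℝ) ^ ((p.1 : ℝ) + 7 * (p.2 : ℝ) / 12) /
          ((2 : ℝ) ^ ((p.1 : ℝ)) + (2 : ℝ) ^ ((p.2 : ℝ))) ^ ((29 : ℝ) / 12)) ≤ 4 := by
  simp only [two_rpow_div_add_rpow_eq]
  have hpos (n : ℕ) : (0 : ℝ) < 2 ^ n := by positivity
  have hθ : (0 : ℝ) < 5 / 12 := by norm_num
  have hgeom := (hasSum_pow_rpow_neg one_lt_two hθ).summable
  refine ⟨summable_mul_rpow_div_add_rpow hpos hpos hθ.le hgeom hgeom, ?_⟩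
  calc _ ≤ (∑' n : ℕ, ((2 : ℝ) ^ n) ^ (-(5 / 12) : ℝ)) *
        (∑' n : ℕ, ((2 : ℝ) ^ n) ^ (-(5 / 12) : ℝ)) / 4 :=
        tsum_mul_rpow_div_add_rpow_le hpos hpos hθ.le hgeom hgeom
    _ ≤ 4 * 4 / 4 := by gcongr <;> exact tsum_two_pow_rpow_neg_five_div_twelve_le
    _ = 4 := by norm_num
end
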